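/- There exists an absolute constant c > 0 such that every set P of m points in ℝ², not all lying on one common line, determines at least c · m^{4/3} distinct distances between points of P and lines spanned by pairs of distinct points of P; that is, |{d(a, ℓ_{bc}) : a, b, c ∈ P, b ≠ c}| ≥ c · m^{4/3}, where ℓ_{bc} denotes the line through b and c. -/

import Mathlib

noncomputable section

abbrev Pt2 := EuclideanSpace ℝ (Fin 2)

/-- A line in the plane: the set of points `a + t • v` for a nonzero direction `v`. -/
def IsLine2 (l : Set Pt2) : Prop :=
  ∃ a v : Pt2, v ≠ 0 ∧ l = {x : Pt2 | ∃ t : ℝ, x = a + t • v}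

/-- The line through two (distinct) points `b` and `c`. -/
def lineThrough2 (b c : Pt2) : Set Pt2 := {x : Pt2 | ∃ t : ℝ, x = b + t • (c - b)}


theorem pl_sgn {g h : ℝ → ℝ} (hg : Continuous g) (hh : Continuous h) {a b : ℝ}
    (hne : ∀ x, a < x → x < b → g x ≠ h x) {x y : ℝ} (hax : a < x) (hxb : x < b)
    (hay : a ≤ y) (hyb : y ≤ b) (hx : g x < h x) : g y ≤ h y := by
  by_contra hcon
  push Not at hcon
  have hc : Continuous (fun t => h t - g t) := hh.sub hg
  rcases lt_trichotomy x y with hxy | hxy | hxy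
  · have := intermediate_value_Icc' hxy.le hc.continuousOn
    have h0 : (0:ℝ) ∈ Set.Icc (h y - g y) (h x - g x) := ⟨by linarith, by linarith⟩
    obtain ⟨w, hw, hw0⟩ := this h0
    have hw1 : w ≠ y := by rintro rfl; simp at hw0; linarith
    have hw2 : w < y := lt_of_le_of_ne hw.2 hw1
    exact hne w (by linarith [hw.1]) (by linarith) (by simp at hw0; linarith)
  · subst hxy; linarith
  · have := intermediate_value_Icc hxy.le hc.continuousOn
    have h0 : (0:ℝ) ∈ Set.Icc (h y - g y) (h x - g x) := ⟨by linarith, by linarith⟩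
    obtain ⟨w, hw, hw0⟩ := this h0
    have hw1 : w ≠ y := by rintro rfl; simp at hw0; linarith
    have hw2 : y < w := lt_of_le_of_ne hw.1 hw1.symm
    exact hne w (by linarith) (by linarith [hw.2]) (by simp at hw0; linarith)

theorem pl_planar {ε : Type*} [DecidableEq ε] (V : Finset (ℝ × ℝ)) (E : Finset ε)
    (f : ε → ℝ → ℝ) (L R : ε → ℝ × ℝ)
    (hf : ∀ e ∈ E, Continuous (f e))
    (hL : ∀ e ∈ E, L e ∈ V) (hR : ∀ e ∈ E, R e ∈ V)
    (hLR : ∀ e ∈ E, (L e).1 < (R e).1)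
    (hfL : ∀ e ∈ E, f e (L e).1 = (L e).2) (hfR : ∀ e ∈ E, f e (R e).1 = (R e).2)
    (hint : ∀ e ∈ E, ∀ z ∈ V, (L e).1 < z.1 → z.1 < (R e).1 → f e z.1 ≠ z.2)
    (hsimple : ∀ e ∈ E, ∀ e' ∈ E, L e = L e' → R e = R e' → e = e')
    (hnc : ∀ e ∈ E, ∀ e' ∈ E, e ≠ e' → ∀ x, (L e).1 < x → x < (R e).1 →
      (L e').1 < x → x < (R e').1 → f e x ≠ f e' x) :
    E.card ≤ 3 * V.card := by
  classical
  -- eta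
  obtain ⟨η, hη, hηR⟩ : ∃ η : ℝ, 0 < η ∧ ∀ e ∈ E, (L e).1 + η < (R e).1 := by
    rcases E.eq_empty_or_nonempty with h | h
    · exact ⟨1, one_pos, by simp [h]⟩
    · obtain ⟨e0, he0, hmin⟩ := E.exists_min_image (fun e => (R e).1 - (L e).1) h
      refine ⟨((R e0).1 - (L e0).1)/2, by linarith [hLR e0 he0], fun e he => ?_⟩
      have := hmin e he
      have := hLR e0 he0
      linarith
  have sgn : ∀ e ∈ E, ∀ e' ∈ E, e ≠ e' → ∀ x y, (L e).1 < x → x < (R e).1 →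
      (L e').1 < x → x < (R e').1 → (L e).1 ≤ y → y ≤ (R e).1 →
      (L e').1 ≤ y → y ≤ (R e').1 → f e x < f e' x → f e y ≤ f e' y := by
    intro e he e' he' hne x y h1 h2 h3 h4 h5 h6 h7 h8 hx
    refine pl_sgn (hf e he) (hf e' he') (a := max (L e).1 (L e').1) (b := min (R e).1 (R e').1)
      ?_ (max_lt h1 h3) (lt_min h2 h4) (max_le h5 h7) (le_min h6 h8) hx
    intro t ht1 ht2
    exact hnc e he e' he' hne t (lt_of_le_of_lt (le_max_left _ _) ht1)
      (lt_of_lt_of_le ht2 (min_le_left _ _)) (lt_of_le_of_lt (le_max_right _ _) ht1)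
      (lt_of_lt_of_le ht2 (min_le_right _ _))
  set tt : ε → ℝ := fun e => (L e).1 + η with htt
  set E0 := E.filter (fun e => ∃ g ∈ E, L g = L e ∧ f e (tt e) < f g (tt e)) with hE0
  have htop : (E \ E0).card ≤ V.card := by
    apply Finset.card_le_card_of_injOn L
    · intro e he
      exact hL e (Finset.mem_sdiff.1 he).1
    · intro e he e' he' hll
      have he := Finset.mem_sdiff.1 he
      have he' := Finset.mem_sdiff.1 he'
      by_contra hne
      have htt' : tt e = tt e' := by simp [htt, hll]
      have hn := hnc e he.1 e' he'.1 hne (tt e) (by simp [htt, hη]) (hηR e he.1)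
        (by rw [htt']; simp [htt, hη]) (by rw [htt']; exact hηR e' he'.1)
      rcases lt_or_gt_of_ne hn with h | h
      · exact he.2 (Finset.mem_filter.2 ⟨he.1, e', he'.1, hll.symm, h⟩)
      · exact he'.2 (Finset.mem_filter.2 ⟨he'.1, e, he.1, hll, by rw [← htt']; exact h⟩)
  have hex : ∀ e, e ∈ E0 → ∃ (g : ε) (z : ℝ × ℝ), g ∈ E ∧ L g = L e ∧ f e (tt e) < f g (tt e) ∧
      (∀ k ∈ E, L k = L e → f e (tt e) < f k (tt e) → f g (tt e) ≤ f k (tt e)) ∧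
      z ∈ V ∧ (L e).1 < z.1 ∧ z.1 ≤ (R e).1 ∧ z.1 ≤ (R g).1 ∧ f e z.1 ≤ z.2 ∧ z.2 ≤ f g z.1 ∧
      (∀ w ∈ V, (L e).1 < w.1 → w.1 ≤ (R e).1 → w.1 ≤ (R g).1 → f e w.1 ≤ w.2 →
        w.2 ≤ f g w.1 → z.1 ≤ w.1) := by
    intro e he
    have he' := (Finset.mem_filter.1 he)
    have heE := he'.1
    obtain ⟨g, hg, hgmin⟩ := (E.filter (fun g => L g = L e ∧ f e (tt e) < f g (tt e))).exists_min_image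
      (fun g => f g (tt e)) (by
        obtain ⟨g, hg, h1, h2⟩ := he'.2
        exact ⟨g, Finset.mem_filter.2 ⟨hg, h1, h2⟩⟩)
    obtain ⟨hgE, hgL, hgt⟩ := Finset.mem_filter.1 hg
    have hne : e ≠ g := by rintro rfl; exact lt_irrefl _ hgt
    have hcl : ∀ y, (L e).1 ≤ y → y ≤ (R e).1 → y ≤ (R g).1 → f e y ≤ f g y := by
      intro y h1 h2 h3
      have hr := hηR g hgE
      rw [hgL] at hr
      exact sgn e heE g hgE hne (tt e) y (by simp [htt, hη]) (hηR e heE)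
        (by rw [hgL]; simp [htt, hη]) hr h1 h2 (by rw [hgL]; exact h1) h3 hgt
    obtain ⟨z, hz, hzmin⟩ := (V.filter (fun w => (L e).1 < w.1 ∧ w.1 ≤ (R e).1 ∧ w.1 ≤ (R g).1 ∧
        f e w.1 ≤ w.2 ∧ w.2 ≤ f g w.1)).exists_min_image (fun w => w.1) (by
        rcases le_total (R e).1 (R g).1 with h | h
        · refine ⟨R e, Finset.mem_filter.2 ⟨hR e heE, hLR e heE, le_rfl, h, (hfR e heE).le, ?_⟩⟩
          rw [← hfR e heE]
          exact hcl _ (hLR e heE).le le_rfl h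
        · have hlr := hLR g hgE
          rw [hgL] at hlr
          refine ⟨R g, Finset.mem_filter.2 ⟨hR g hgE, hlr, h, le_rfl, ?_, (hfR g hgE).ge⟩⟩
          rw [← hfR g hgE]
          exact hcl _ hlr.le h le_rfl)
    obtain ⟨hzV, z1, z2, z3, z4, z5⟩ := Finset.mem_filter.1 hz
    exact ⟨g, z, hgE, hgL, hgt, fun k hk h1 h2 => hgmin k (Finset.mem_filter.2 ⟨hk, h1, h2⟩),
      hzV, z1, z2, z3, z4, z5, fun w hw h1 h2 h3 h4 h5 =>
        hzmin w (Finset.mem_filter.2 ⟨hw, h1, h2, h3, h4, h5⟩)⟩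
  choose! G Z hGE hGL hGt hGmin hZV hZ1 hZ2 hZ3 hZ4 hZ5 hZmin using hex
  have hE0E : ∀ e ∈ E0, e ∈ E := fun e he => (Finset.mem_filter.1 he).1
  -- no edge strictly inside a wedge
  have inside : ∀ e ∈ E0, ∀ g ∈ E, (L g).1 < (Z e).1 → (Z e).1 ≤ (R g).1 → ∀ x, (L e).1 < x →
      (L g).1 < x → x < (Z e).1 → f e x < f g x → f g x < f (G e) x → False := by
    intro e he g hg hg1 hg2 x hx1 hx2 hx3 hlt1 hlt2
    have heE := hE0E e he
    have hGe := hGE e he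
    have hGl := hGL e he
    have a2 := hZ2 e he
    have a3 := hZ3 e he
    have n1 : e ≠ g := by rintro rfl; exact lt_irrefl _ hlt1
    have n2 : g ≠ G e := by intro h; rw [← h] at hlt2; exact lt_irrefl _ hlt2
    have c1 : ∀ y, (L e).1 ≤ y → (L g).1 ≤ y → y ≤ (Z e).1 → f e y ≤ f g y := by
      intro y h1 h2 h3
      exact sgn e heE g hg n1 x y hx1 (by linarith) hx2 (by linarith) h1 (by linarith) h2
        (by linarith) hlt1
    have c2 : ∀ y, (L e).1 ≤ y → (L g).1 ≤ y → y ≤ (Z e).1 → f g y ≤ f (G e) y := by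
      intro y h1 h2 h3
      exact sgn g hg (G e) hGe n2 x y hx2 (by linarith) (by rw [hGl]; exact hx1) (by linarith)
        h2 (by linarith) (by rw [hGl]; exact h1) (by linarith) hlt2
    rcases lt_trichotomy (L e).1 (L g).1 with h | h | h
    · have q1 := c1 (L g).1 h.le le_rfl hg1.le
      have q2 := c2 (L g).1 h.le le_rfl hg1.le
      rw [hfL g hg] at q1 q2
      have := hZmin e he (L g) (hL g hg) h (by linarith) (by linarith) q1 q2
      linarith
    · have q1 := c1 (L g).1 h.le le_rfl hg1.le
      have q2 := c2 (L g).1 h.le le_rfl hg1.le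
      rw [hfL g hg] at q1 q2
      have e1 := hfL e heE
      have e2 := hfL (G e) hGe
      rw [hGl] at e2
      rw [← h, e1] at q1
      rw [← h, e2] at q2
      have hLL : L g = L e := Prod.ext h.symm (le_antisymm q2 q1)
      have t1 : tt e < (R e).1 := hηR e heE
      have t2 : tt e < (R g).1 := by
        have := hηR g hg; rw [hLL] at this; exact this
      have t3 : tt e < (R (G e)).1 := by
        have := hηR (G e) hGe; rw [hGl] at this; exact this
      have t0 : (L e).1 < tt e := by simp [htt, hη]
      have k1 : f e (tt e) < f g (tt e) := by
        refine lt_of_le_of_ne ?_ (hnc e heE g hg n1 _ t0 t1 (by rw [hLL]; exact t0) t2)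
        exact sgn e heE g hg n1 x _ hx1 (by linarith) hx2 (by linarith) t0.le t1.le
          (by rw [hLL]; exact t0.le) t2.le hlt1
      have k2 : f g (tt e) < f (G e) (tt e) := by
        refine lt_of_le_of_ne ?_ (hnc g hg (G e) hGe n2 _ (by rw [hLL]; exact t0) t2
          (by rw [hGl]; exact t0) t3)
        exact sgn g hg (G e) hGe n2 x _ hx2 (by linarith) (by rw [hGl]; exact hx1) (by linarith)
          (by rw [hLL]; exact t0.le) t2.le (by rw [hGl]; exact t0.le) t3.le hlt2
      have := hGmin e he g hg hLL k1
      linarith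
    · have hz1 := hZ1 e he
      have q1 := c1 (L e).1 le_rfl h.le hz1.le
      have q2 := c2 (L e).1 le_rfl h.le hz1.le
      have e1 := hfL e heE
      have e2 := hfL (G e) hGe
      rw [hGl] at e2
      rw [e1] at q1
      rw [e2] at q2
      exact hint g hg (L e) (hL e heE) h (by linarith) (le_antisymm q2 q1)
  have hE0card : E0.card ≤ 2 * V.card := by
    have hprod : (V ×ˢ (Finset.univ : Finset Bool)).card = 2 * V.card := by
      rw [Finset.card_product]; simp [mul_comm]
    rw [← hprod]
    apply Finset.card_le_card_of_injOn (fun e => (Z e, decide (Z e = R e)))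
    · intro e he
      simp only [Finset.coe_product, Set.mem_prod, Finset.mem_coe, Finset.mem_univ, and_true]
      exact hZV e he
    · -- injectivity
      have keyA : ∀ e ∈ E0, ∀ e' ∈ E0, Z e = Z e' → f e (Z e).1 < (Z e).2 →
          f e' (Z e).1 < (Z e).2 → ∀ x, (L e).1 < x → (L e').1 < x → x < (Z e).1 →
          f e x < f e' x → False := by
        intro e he e' he' hz h1 h2 x hx1 hx2 hx3 hlt
        have a1 := hZ1 e' he'
        have a2 := hZ2 e' he'
        have b2 := hZ2 e he
        have b3 := hZ3 e he
        have b5 := hZ5 e he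
        rw [← hz] at a1 a2
        have n2 : G e ≠ e' := by intro h; rw [h] at b5; linarith
        refine inside e he e' (hE0E e' he') a1 a2 x hx1 hx2 hx3 hlt ?_
        have hGl := hGL e he
        rcases lt_or_gt_of_ne (hnc (G e) (hGE e he) e' (hE0E e' he') n2 x (by rw [hGl]; exact hx1)
          (by linarith) hx2 (by linarith)) with h | h
        · have := sgn (G e) (hGE e he) e' (hE0E e' he') n2 x (Z e).1 (by rw [hGl]; exact hx1)
            (by linarith) hx2 (by linarith) (by rw [hGl]; exact (hZ1 e he).le) b3 a1.le a2 h
          linarith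
        · exact h
      have keyB : ∀ e ∈ E0, ∀ e' ∈ E0, Z e = Z e' → Z e = R e → (Z e).2 < f (G e') (Z e).1 →
          ∀ x, (L e).1 < x → (L e').1 < x → x < (Z e).1 →
          f (G e') x < f (G e) x → False := by
        intro e he e' he' hz h1 h2 x hx1 hx2 hx3 hlt
        have a1 := hZ1 e' he'
        have a3 := hZ3 e' he'
        have hGl := hGL e' he'
        rw [← hz] at a1 a3
        have b1 := hZ1 e he
        have b2 := hZ2 e he
        have hv : f e (Z e).1 = (Z e).2 := by rw [h1]; exact hfR e (hE0E e he)
        have n2 : e ≠ G e' := by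
          intro h; rw [← h, hv] at h2; exact lt_irrefl _ h2
        refine inside e he (G e') (hGE e' he') (by rw [hGl]; exact a1) a3 x hx1
          (by rw [hGl]; exact hx2) hx3 ?_ hlt
        rcases lt_or_gt_of_ne (hnc e (hE0E e he) (G e') (hGE e' he') n2 x hx1 (by linarith)
          (by rw [hGl]; exact hx2) (by linarith)) with h | h
        · exact h
        · have := sgn (G e') (hGE e' he') e (hE0E e he) n2.symm x (Z e).1 (by rw [hGl]; exact hx2)
            (by linarith) hx1 (by linarith) (by rw [hGl]; exact a1.le) a3 b1.le b2 h
          linarith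
      intro e he e' he' heq
      simp only [Prod.mk.injEq, decide_eq_decide] at heq
      obtain ⟨hz, hiff⟩ := heq
      have he : e ∈ E0 := he
      have he' : e' ∈ E0 := he'
      by_contra hne
      obtain ⟨x, hx, hx3⟩ := exists_between (max_lt (hZ1 e he) (show (L e').1 < (Z e).1 by
        rw [hz]; exact hZ1 e' he'))
      have hx1 := lt_of_le_of_lt (le_max_left _ _) hx
      have hx2 := lt_of_le_of_lt (le_max_right _ _) hx
      by_cases hB : Z e = R e
      · have hB' := hiff.1 hB
        have strict : ∀ d ∈ E0, Z d = R d → (Z d).2 < f (G d) (Z d).1 := by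
          intro d hd hdR
          refine lt_of_le_of_ne (hZ5 d hd) ?_
          intro hcon
          rcases lt_or_eq_of_le (hZ3 d hd) with h | h
          · exact hint (G d) (hGE d hd) (Z d) (hZV d hd) (by rw [hGL d hd]; exact hZ1 d hd) h
              hcon.symm
          · have hr : Z d = R (G d) := by
              refine Prod.ext h ?_
              rw [hcon, h]
              exact hfR (G d) (hGE d hd)
            have := hsimple d (hE0E d hd) (G d) (hGE d hd) (hGL d hd).symm (hdR.symm.trans hr)
            have h2 := hGt d hd
            rw [← this] at h2
            exact lt_irrefl _ h2
        by_cases hGG : G e = G e'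
        · have hLL : L e = L e' := by rw [← hGL e he, hGG, hGL e' he']
          have htt' : tt e = tt e' := by simp [htt, hLL]
          have t0 : (L e).1 < tt e := by simp [htt, hη]
          have t1 := hηR e' (hE0E e' he')
          rcases lt_or_gt_of_ne (hnc e (hE0E e he) e' (hE0E e' he') hne (tt e) t0
            (hηR e (hE0E e he)) (by rw [← hLL]; exact t0) (by rw [htt']; exact t1)) with h | h
          · have h1 := hGmin e he e' (hE0E e' he') hLL.symm h
            have h2 := hGt e' he'
            rw [← htt', ← hGG] at h2
            linarith
          · rw [htt'] at h
            have h1 := hGmin e' he' e (hE0E e he) hLL h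
            have h2 := hGt e he
            rw [htt', hGG] at h2
            linarith
        · have b3 := hZ3 e he
          have a3 := hZ3 e' he'
          rw [← hz] at a3
          rcases lt_or_gt_of_ne (hnc (G e) (hGE e he) (G e') (hGE e' he') hGG x
            (by rw [hGL e he]; exact hx1) (by linarith) (by rw [hGL e' he']; exact hx2)
            (by linarith)) with h | h
          · refine keyB e' he' e he hz.symm hB' ?_ x hx2 hx1 (by rw [← hz]; exact hx3) h
            rw [← hz]; exact strict e he hB
          · refine keyB e he e' he' hz hB ?_ x hx1 hx2 hx3 h
            rw [hz]; exact strict e' he' hB'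
      · have hB' : ¬ Z e' = R e' := fun h => hB (hiff.2 h)
        have strict : ∀ d ∈ E0, Z d ≠ R d → f d (Z d).1 < (Z d).2 := by
          intro d hd hdR
          refine lt_of_le_of_ne (hZ4 d hd) ?_
          intro hcon
          rcases lt_or_eq_of_le (hZ2 d hd) with h | h
          · exact hint d (hE0E d hd) (Z d) (hZV d hd) (hZ1 d hd) h hcon
          · apply hdR
            refine Prod.ext h ?_
            rw [← hcon, h]
            exact hfR d (hE0E d hd)
        have s1 := strict e he hB
        have s2 := strict e' he' hB'
        have a2 := hZ2 e' he'
        have b2 := hZ2 e he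
        rw [← hz] at s2 a2
        rcases lt_or_gt_of_ne (hnc e (hE0E e he) e' (hE0E e' he') hne x hx1 (by linarith) hx2
          (by linarith)) with h | h
        · exact keyA e he e' he' hz s1 s2 x hx1 hx2 hx3 h
        · exact keyA e' he' e he hz.symm (by rw [← hz]; exact s2) (by rw [← hz]; exact s1) x hx2 hx1
            (by rw [← hz]; exact hx3) h
  have hsplit : E.card = (E \ E0).card + E0.card := by
    have : E0 ⊆ E := Finset.filter_subset _ _
    rw [Finset.card_sdiff_of_subset this]
    have := Finset.card_le_card this
    omega
  omega


theorem cl_cnt {α : Type*} [Fintype α] [DecidableEq α] {M : ℕ} (Q : (α → Fin M) → Prop)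
    [DecidablePred Q] (a b : α) (hab : a ≠ b)
    (hQ : ∀ c t, Q (Function.update c b t) ↔ Q c) :
    (Finset.univ.filter (fun c : α → Fin M => Q c ∧ c a = c b)).card * M =
      (Finset.univ.filter Q).card := by
  have h : ((Finset.univ.filter (fun c : α → Fin M => Q c ∧ c a = c b)) ×ˢ
      (Finset.univ : Finset (Fin M))).card = (Finset.univ.filter Q).card := by
    apply Finset.card_nbij' (fun p => Function.update p.1 b p.2)
      (fun c => (Function.update c b (c a), c b))
    · rintro ⟨c, t⟩ hc
      simp at hc ⊢
      exact (hQ c t).2 hc.1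
    · intro c hc
      simp at hc ⊢
      exact ⟨(hQ c _).2 hc, by rw [Function.update_of_ne hab]⟩
    · rintro ⟨c, t⟩ hc
      simp at hc ⊢
      rw [Function.update_of_ne hab, hc.2]
    · intro c hc
      simp
  rw [Finset.card_product] at h
  simpa using h

theorem cl_swap {γ β : Type*} [Fintype γ] (S : Finset β) (q : γ → β → Prop)
    [∀ c, DecidablePred (q c)] [∀ b, DecidablePred (fun c => q c b)] :
    ∑ c : γ, (S.filter (q c)).card =
      ∑ b ∈ S, (Finset.univ.filter (fun c : γ => q c b)).card := by
  simp only [Finset.card_filter]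
  exact Finset.sum_comm

theorem cl_crossing {ε : Type*} [DecidableEq ε] (V : Finset (ℝ × ℝ)) (E : Finset ε)
    (f : ε → ℝ → ℝ) (L R : ε → ℝ × ℝ)
    (hf : ∀ e ∈ E, Continuous (f e))
    (hL : ∀ e ∈ E, L e ∈ V) (hR : ∀ e ∈ E, R e ∈ V)
    (hLR : ∀ e ∈ E, (L e).1 < (R e).1)
    (hfL : ∀ e ∈ E, f e (L e).1 = (L e).2) (hfR : ∀ e ∈ E, f e (R e).1 = (R e).2)
    (hint : ∀ e ∈ E, ∀ z ∈ V, (L e).1 < z.1 → z.1 < (R e).1 → f e z.1 ≠ z.2)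
    (hsimple : ∀ e ∈ E, ∀ e' ∈ E, L e = L e' → R e = R e' → e = e')
    (M : ℕ) (hM : 0 < M) (A X : Finset (ε × ε))
    (hcr : ∀ e ∈ E, ∀ e' ∈ E, e ≠ e' → ∀ x, (L e).1 < x → x < (R e).1 →
      (L e').1 < x → x < (R e').1 → f e x = f e' x →
      ((L e = L e' ∨ R e = R e') → (e, e') ∈ A) ∧ (L e ≠ L e' → R e ≠ R e' → (e, e') ∈ X)) :
    E.card * M ^ 2 ≤ 3 * V.card * M ^ 3 + A.card * M + X.card := by
  classical
  have : NeZero M := ⟨hM.ne'⟩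
  -- crossing sets
  set Cr : ε × ε → Prop := fun p => p.1 ≠ p.2 ∧ ∃ x, (L p.1).1 < x ∧ x < (R p.1).1 ∧
      (L p.2).1 < x ∧ x < (R p.2).1 ∧ f p.1 x = f p.2 x with hCr
  set A' := (E ×ˢ E).filter (fun p => Cr p ∧ (L p.1 = L p.2 ∨ R p.1 = R p.2)) with hA'
  set X' := (E ×ˢ E).filter (fun p => Cr p ∧ L p.1 ≠ L p.2 ∧ R p.1 ≠ R p.2) with hX'
  have hAA : A'.card ≤ A.card := by
    apply Finset.card_le_card
    rintro ⟨e, e'⟩ hp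
    simp only [hA', hCr, Finset.mem_filter, Finset.mem_product] at hp
    obtain ⟨⟨he, he'⟩, ⟨hne, x, h1, h2, h3, h4, h5⟩, h⟩ := hp
    exact (hcr e he e' he' hne x h1 h2 h3 h4 h5).1 h
  have hXX : X'.card ≤ X.card := by
    apply Finset.card_le_card
    rintro ⟨e, e'⟩ hp
    simp only [hX', hCr, Finset.mem_filter, Finset.mem_product] at hp
    obtain ⟨⟨he, he'⟩, ⟨hne, x, h1, h2, h3, h4, h5⟩, h, h'⟩ := hp
    exact (hcr e he e' he' hne x h1 h2 h3 h4 h5).2 h h'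
  let col : (V → Fin M) → ℝ × ℝ → Fin M := fun c p => if h : p ∈ V then c ⟨p, h⟩ else 0
  have hcol : ∀ c p (h : p ∈ V), col c p = c ⟨p, h⟩ := by
    intro c p h; simp only [col, dif_pos h]
  let mono : (V → Fin M) → ε × ε → Prop := fun c p =>
    col c (L p.1) = col c (R p.1) ∧ col c (L p.2) = col c (R p.2) ∧ col c (L p.1) = col c (L p.2)
  -- per-color planar inequality
  have hpc : ∀ c : V → Fin M, (E.filter (fun e => col c (L e) = col c (R e))).card ≤
      3 * V.card + ((A'.filter (mono c)).card + (X'.filter (mono c)).card) := by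
    intro c
    rw [Finset.card_eq_sum_card_fiberwise (f := fun e => col c (L e)) (t := Finset.univ)
      (fun _ _ => Finset.mem_coe.2 (Finset.mem_univ _)),
      Finset.card_eq_sum_card_fiberwise (s := V) (f := fun p => col c p) (t := Finset.univ)
      (fun _ _ => Finset.mem_coe.2 (Finset.mem_univ _)),
      Finset.card_eq_sum_card_fiberwise (s := A'.filter (mono c)) (f := fun p => col c (L p.1))
      (t := Finset.univ) (fun _ _ => Finset.mem_coe.2 (Finset.mem_univ _)),
      Finset.card_eq_sum_card_fiberwise (s := X'.filter (mono c)) (f := fun p => col c (L p.1))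
      (t := Finset.univ) (fun _ _ => Finset.mem_coe.2 (Finset.mem_univ _)),
      Finset.mul_sum, ← Finset.sum_add_distrib, ← Finset.sum_add_distrib]
    apply Finset.sum_le_sum
    intro i _
    set F := (E.filter (fun e => col c (L e) = col c (R e))).filter (fun e => col c (L e) = i)
      with hF
    set A1 := (A'.filter (mono c)).filter (fun p => col c (L p.1) = i) with hA1
    set X1 := (X'.filter (mono c)).filter (fun p => col c (L p.1) = i) with hX1
    set bad := (A1 ∪ X1).image Prod.fst with hbad
    have hFE : ∀ e ∈ F \ bad, e ∈ E ∧ col c (L e) = i ∧ col c (R e) = i ∧ e ∉ bad := by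
      intro e he
      simp only [hF, Finset.mem_sdiff, Finset.mem_filter] at he
      exact ⟨he.1.1.1, he.1.2, by rw [← he.1.1.2, he.1.2], he.2⟩
    have hp := pl_planar (V.filter (fun p => col c p = i)) (F \ bad) f L R
      (fun e he => hf e (hFE e he).1)
      (fun e he => Finset.mem_filter.2 ⟨hL e (hFE e he).1, (hFE e he).2.1⟩)
      (fun e he => Finset.mem_filter.2 ⟨hR e (hFE e he).1, (hFE e he).2.2.1⟩)
      (fun e he => hLR e (hFE e he).1)
      (fun e he => hfL e (hFE e he).1)
      (fun e he => hfR e (hFE e he).1)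
      (fun e he z hz => hint e (hFE e he).1 z (Finset.mem_filter.1 hz).1)
      (fun e he e' he' => hsimple e (hFE e he).1 e' (hFE e' he').1)
      (by
        intro e he e' he' hne x h1 h2 h3 h4 h5
        obtain ⟨heE, hl, hr, hb⟩ := hFE e he
        obtain ⟨heE', hl', hr', hb'⟩ := hFE e' he'
        apply hb
        rw [hbad, Finset.mem_image]
        refine ⟨(e, e'), ?_, rfl⟩
        have hcrr : Cr (e, e') := ⟨hne, x, h1, h2, h3, h4, h5⟩
        have hmono : mono c (e, e') := ⟨hl.trans hr.symm, hl'.trans hr'.symm, hl.trans hl'.symm⟩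
        rw [Finset.mem_union]
        by_cases hadj : L e = L e' ∨ R e = R e'
        · left
          exact Finset.mem_filter.2 ⟨Finset.mem_filter.2 ⟨Finset.mem_filter.2
            ⟨Finset.mem_product.2 ⟨heE, heE'⟩, hcrr, hadj⟩, hmono⟩, hl⟩
        · right
          push Not at hadj
          exact Finset.mem_filter.2 ⟨Finset.mem_filter.2 ⟨Finset.mem_filter.2
            ⟨Finset.mem_product.2 ⟨heE, heE'⟩, hcrr, hadj⟩, hmono⟩, hl⟩)
    have hb1 : bad.card ≤ A1.card + X1.card :=
      Finset.card_image_le.trans (Finset.card_union_le _ _)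
    have hb2 := Finset.le_card_sdiff bad F
    omega
  set T := (Finset.univ : Finset (V → Fin M)).card with hT
  -- counts
  have cntE : ∀ e ∈ E, (Finset.univ.filter (fun c : V → Fin M =>
      col c (L e) = col c (R e))).card * M = T := by
    intro e he
    have hne : (⟨L e, hL e he⟩ : V) ≠ ⟨R e, hR e he⟩ := by
      intro h
      have := hLR e he
      rw [Subtype.mk.inj h] at this
      exact lt_irrefl _ this
    have := cl_cnt (M := M) (fun _ => True) (⟨L e, hL e he⟩ : V) ⟨R e, hR e he⟩ hne (by simp)
    simp only [true_and, Finset.filter_true] at this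
    rw [hT, ← this]
    simp only [hcol _ _ (hL e he), hcol _ _ (hR e he)]
  have cntA : ∀ p ∈ A', (Finset.univ.filter (fun c : V → Fin M => mono c p)).card * M ^ 2 ≤ T := by
    rintro ⟨e, e'⟩ hp
    obtain ⟨hpE, ⟨hpne, x, x1, x2, x3, x4, x5⟩, hadj⟩ := Finset.mem_filter.1 hp
    obtain ⟨he, he'⟩ := Finset.mem_product.1 hpE
    dsimp only at he he' hpne hadj x1 x2 x3 x4
    have hne : (⟨L e, hL e he⟩ : V) ≠ ⟨R e, hR e he⟩ := by
      intro h
      have := hLR e he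
      rw [Subtype.mk.inj h] at this
      exact lt_irrefl _ this
    have h1 := cl_cnt (M := M) (fun _ => True) (⟨L e, hL e he⟩ : V) ⟨R e, hR e he⟩ hne (by simp)
    simp only [true_and, Finset.filter_true] at h1
    rw [hT, ← h1, pow_two, ← mul_assoc]
    apply Nat.mul_le_mul_right
    rcases hadj with hadj | hadj
    · -- share L, use R e'
      have n1 : R e' ≠ L e := by intro h; rw [h] at x4; linarith
      have n2 : R e' ≠ R e := fun h => hpne (hsimple e he e' he' hadj h.symm)
      have h2 := cl_cnt (M := M) (fun c => c (⟨L e, hL e he⟩ : V) = c ⟨R e, hR e he⟩)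
        (⟨L e, hL e he⟩ : V) ⟨R e', hR e' he'⟩ (by simpa using n1.symm) (by
          intro c t
          rw [Function.update_of_ne (by simpa using n1.symm),
            Function.update_of_ne (by simpa using n2.symm)])
      rw [← h2]
      apply Nat.mul_le_mul_right
      apply Finset.card_le_card
      intro c hc
      simp only [mono, Finset.mem_filter, Finset.mem_univ, true_and, hcol _ _ (hL e he),
        hcol _ _ (hR e he), hcol _ _ (hL e' he'), hcol _ _ (hR e' he')] at hc ⊢
      exact ⟨hc.1, hc.2.2.trans hc.2.1⟩
    · have n1 : L e' ≠ R e := by intro h; rw [h] at x3; linarith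
      have n2 : L e' ≠ L e := fun h => hpne (hsimple e he e' he' h.symm hadj)
      have h2 := cl_cnt (M := M) (fun c => c (⟨L e, hL e he⟩ : V) = c ⟨R e, hR e he⟩)
        (⟨L e, hL e he⟩ : V) ⟨L e', hL e' he'⟩ (by simpa using n2.symm) (by
          intro c t
          rw [Function.update_of_ne (by simpa using n2.symm),
            Function.update_of_ne (by simpa using n1.symm)])
      rw [← h2]
      apply Nat.mul_le_mul_right
      apply Finset.card_le_card
      intro c hc
      simp only [mono, Finset.mem_filter, Finset.mem_univ, true_and, hcol _ _ (hL e he),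
        hcol _ _ (hR e he), hcol _ _ (hL e' he'), hcol _ _ (hR e' he')] at hc ⊢
      exact ⟨hc.1, hc.2.2⟩
  have cntX : ∀ p ∈ X', (Finset.univ.filter (fun c : V → Fin M => mono c p)).card * M ^ 3 ≤ T := by
    rintro ⟨e, e'⟩ hp
    obtain ⟨hpE, ⟨hpne, x, x1, x2, x3, x4, x5⟩, hnl, hnr⟩ := Finset.mem_filter.1 hp
    obtain ⟨he, he'⟩ := Finset.mem_product.1 hpE
    dsimp only at he he' hpne hnl hnr x1 x2 x3 x4
    have hne : (⟨L e, hL e he⟩ : V) ≠ ⟨R e, hR e he⟩ := by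
      intro h
      have := hLR e he
      rw [Subtype.mk.inj h] at this
      exact lt_irrefl _ this
    have h1 := cl_cnt (M := M) (fun _ => True) (⟨L e, hL e he⟩ : V) ⟨R e, hR e he⟩ hne (by simp)
    simp only [true_and, Finset.filter_true] at h1
    rw [hT, ← h1, pow_succ, ← mul_assoc]
    apply Nat.mul_le_mul_right
    have n1 : R e' ≠ L e := by intro h; rw [h] at x4; linarith
    have n2 : L e' ≠ R e := by intro h; rw [h] at x3; linarith
    have n3 : L e' ≠ R e' := by intro h; rw [h] at x3; linarith
    have h2 := cl_cnt (M := M) (fun c => c (⟨L e, hL e he⟩ : V) = c ⟨R e, hR e he⟩)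
        (⟨L e, hL e he⟩ : V) ⟨R e', hR e' he'⟩ (by simpa using n1.symm) (by
          intro c t
          rw [Function.update_of_ne (by simpa using n1.symm),
            Function.update_of_ne (by simpa using hnr)])
    rw [← h2, pow_two, ← mul_assoc]
    apply Nat.mul_le_mul_right
    have h3 := cl_cnt (M := M) (fun c => c (⟨L e, hL e he⟩ : V) = c ⟨R e, hR e he⟩ ∧
        c (⟨L e, hL e he⟩ : V) = c ⟨R e', hR e' he'⟩)
        (⟨L e, hL e he⟩ : V) ⟨L e', hL e' he'⟩ (by simpa using hnl) (by
          intro c t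
          rw [Function.update_of_ne (by simpa using hnl),
            Function.update_of_ne (by simpa using n2.symm),
            Function.update_of_ne (by simpa using n3.symm)])
    rw [← h3]
    apply Nat.mul_le_mul_right
    apply Finset.card_le_card
    intro c hc
    simp only [mono, Finset.mem_filter, Finset.mem_univ, true_and, hcol _ _ (hL e he),
      hcol _ _ (hR e he), hcol _ _ (hL e' he'), hcol _ _ (hR e' he')] at hc ⊢
    exact ⟨⟨hc.1, hc.2.2.trans hc.2.1⟩, hc.2.2⟩
  have hTpos : 0 < T := by
    rw [hT]; exact Finset.card_pos.2 Finset.univ_nonempty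
  -- double counting
  have hsum := Finset.sum_le_sum (s := (Finset.univ : Finset (V → Fin M))) (fun c _ => hpc c)
  rw [Finset.sum_add_distrib, Finset.sum_add_distrib, cl_swap E (fun c e => col c (L e) = col c (R e)),
    cl_swap A' mono, cl_swap X' mono, Finset.sum_const,
    smul_eq_mul] at hsum
  have e1 : (∑ e ∈ E, (Finset.univ.filter (fun c : V → Fin M =>
      col c (L e) = col c (R e))).card) * M = E.card * T := by
    rw [Finset.sum_mul, Finset.sum_congr rfl cntE, Finset.sum_const, smul_eq_mul]
  have e2 : (∑ p ∈ A', (Finset.univ.filter (fun c : V → Fin M => mono c p)).card) * M ^ 2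
      ≤ A'.card * T := by
    rw [Finset.sum_mul, ← smul_eq_mul, ← Finset.sum_const]
    exact Finset.sum_le_sum cntA
  have e3 : (∑ p ∈ X', (Finset.univ.filter (fun c : V → Fin M => mono c p)).card) * M ^ 3
      ≤ X'.card * T := by
    rw [Finset.sum_mul, ← smul_eq_mul, ← Finset.sum_const]
    exact Finset.sum_le_sum cntX
  have hfin : (E.card * M ^ 2) * T ≤ (3 * V.card * M ^ 3 + A.card * M + X.card) * T := by
    calc (E.card * M ^ 2) * T = ((∑ e ∈ E, (Finset.univ.filter (fun c : V → Fin M =>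
          col c (L e) = col c (R e))).card) * M) * M ^ 2 := by rw [e1]; ring
      _ ≤ ((T * (3 * V.card) + (∑ p ∈ A', (Finset.univ.filter
            (fun c : V → Fin M => mono c p)).card + ∑ p ∈ X', (Finset.univ.filter
            (fun c : V → Fin M => mono c p)).card)) * M) * M ^ 2 := by gcongr
      _ = 3 * V.card * M ^ 3 * T + ((∑ p ∈ A', (Finset.univ.filter
            (fun c : V → Fin M => mono c p)).card) * M ^ 2) * M + (∑ p ∈ X', (Finset.univ.filter
            (fun c : V → Fin M => mono c p)).card) * M ^ 3 := by ring
      _ ≤ 3 * V.card * M ^ 3 * T + (A'.card * T) * M + X'.card * T := by gcongr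
      _ ≤ 3 * V.card * M ^ 3 * T + (A.card * T) * M + X.card * T := by gcongr
      _ = _ := by ring
  exact Nat.le_of_mul_le_mul_right hfin hTpos


def HasNxt (V : Finset (ℝ × ℝ)) (g : ℝ → ℝ) (u : ℝ × ℝ) : Prop :=
  ∃ w ∈ V, u.1 < w.1 ∧ g w.1 = w.2

theorem exists_nxt {V : Finset (ℝ × ℝ)} {g : ℝ → ℝ} {u : ℝ × ℝ} (h : HasNxt V g u) :
    ∃ w, w ∈ V ∧ u.1 < w.1 ∧ g w.1 = w.2 ∧
      ∀ w' ∈ V, u.1 < w'.1 → g w'.1 = w'.2 → w.1 ≤ w'.1 := by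
  classical
  obtain ⟨w, hw, hmin⟩ := (V.filter (fun w => u.1 < w.1 ∧ g w.1 = w.2)).exists_min_image
    (fun w => w.1) (by
      obtain ⟨w, hw, h1, h2⟩ := h
      exact ⟨w, Finset.mem_filter.2 ⟨hw, h1, h2⟩⟩)
  obtain ⟨h1, h2, h3⟩ := Finset.mem_filter.1 hw
  exact ⟨w, h1, h2, h3, fun w' hw' a b => hmin w' (Finset.mem_filter.2 ⟨hw', a, b⟩)⟩

open Classical in
noncomputable def nxt (V : Finset (ℝ × ℝ)) (g : ℝ → ℝ) (u : ℝ × ℝ) : ℝ × ℝ :=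
  if h : HasNxt V g u then (exists_nxt h).choose else u

theorem nxt_spec {V : Finset (ℝ × ℝ)} {g : ℝ → ℝ} {u : ℝ × ℝ} (h : HasNxt V g u) :
    nxt V g u ∈ V ∧ u.1 < (nxt V g u).1 ∧ g (nxt V g u).1 = (nxt V g u).2 ∧
      ∀ w' ∈ V, u.1 < w'.1 → g w'.1 = w'.2 → (nxt V g u).1 ≤ w'.1 := by
  rw [nxt, dif_pos h]
  exact (exists_nxt h).choose_spec

open Classical in
noncomputable def incs {ι : Type*} (V : Finset (ℝ × ℝ)) (I : Finset ι) (F : ι → ℝ → ℝ) :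
    Finset (ι × (ℝ × ℝ)) := (I ×ˢ V).filter (fun p => F p.1 p.2.1 = p.2.2)

open Classical in
noncomputable def edges0 {ι : Type*} (V : Finset (ℝ × ℝ)) (I : Finset ι) (F : ι → ℝ → ℝ) :
    Finset (ι × (ℝ × ℝ)) := (incs V I F).filter (fun p => HasNxt V (F p.1) p.2)

theorem mem_incs {ι : Type*} {V : Finset (ℝ × ℝ)} {I : Finset ι} {F : ι → ℝ → ℝ}
    {p : ι × (ℝ × ℝ)} : p ∈ incs V I F ↔ p.1 ∈ I ∧ p.2 ∈ V ∧ F p.1 p.2.1 = p.2.2 := by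
  simp [incs, and_assoc]

theorem mem_edges0 {ι : Type*} {V : Finset (ℝ × ℝ)} {I : Finset ι} {F : ι → ℝ → ℝ}
    {p : ι × (ℝ × ℝ)} : p ∈ edges0 V I F ↔
      p.1 ∈ I ∧ p.2 ∈ V ∧ F p.1 p.2.1 = p.2.2 ∧ HasNxt V (F p.1) p.2 := by
  simp [edges0, mem_incs, and_assoc]

theorem card_edges0 {ι : Type*} (V : Finset (ℝ × ℝ)) (I : Finset ι) (F : ι → ℝ → ℝ) :
    (incs V I F).card ≤ (edges0 V I F).card + I.card := by
  classical
  have h : (incs V I F \ edges0 V I F).card ≤ I.card := by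
    apply Finset.card_le_card_of_injOn Prod.fst
    · intro p hp
      exact (mem_incs.1 (Finset.mem_sdiff.1 hp).1).1
    · rintro ⟨i, u⟩ hp ⟨i', u'⟩ hp' heq
      dsimp only at heq
      subst heq
      obtain ⟨h1, h2⟩ := Finset.mem_sdiff.1 hp
      obtain ⟨h1', h2'⟩ := Finset.mem_sdiff.1 hp'
      have a := mem_incs.1 h1
      have a' := mem_incs.1 h1'
      dsimp only at a a'
      rcases lt_trichotomy u.1 u'.1 with h | h | h
      · exact absurd (mem_edges0.2 ⟨a.1, a.2.1, a.2.2, u', a'.2.1, h, a'.2.2⟩) h2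
      · have : u = u' := Prod.ext h (by rw [← a.2.2, ← a'.2.2, h])
        rw [this]
      · exact absurd (mem_edges0.2 ⟨a'.1, a'.2.1, a'.2.2, u, a.2.1, h, a.2.2⟩) h2'
  have := Finset.le_card_sdiff (edges0 V I F) (incs V I F)
  omega

/-- two edges of the same curve with overlapping interior coincide -/
theorem edges0_unique {ι : Type*} {V : Finset (ℝ × ℝ)} {I : Finset ι} {F : ι → ℝ → ℝ}
    {i : ι} {u u' : ℝ × ℝ} (h : (i, u) ∈ edges0 V I F) (h' : (i, u') ∈ edges0 V I F)
    {x : ℝ} (h1 : u.1 < x) (h2 : x < (nxt V (F i) u).1) (h3 : u'.1 < x)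
    (h4 : x < (nxt V (F i) u').1) : u = u' := by
  obtain ⟨a1, a2, a3, a4⟩ := mem_edges0.1 h
  obtain ⟨b1, b2, b3, b4⟩ := mem_edges0.1 h'
  dsimp only at *
  have s := (nxt_spec a4).2.2.2 u' b2
  have s' := (nxt_spec b4).2.2.2 u a2
  rcases lt_trichotomy u.1 u'.1 with h | h | h
  · have := s h b3; linarith
  · exact Prod.ext h (by rw [← a3, ← b3, h])
  · have := s' h a3; linarith

theorem card_le_two_of_no_three {S : Finset ℝ}
    (h : ∀ x ∈ S, ∀ y ∈ S, ∀ z ∈ S, x < y → y < z → False) : S.card ≤ 2 := by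
  by_contra hc
  push Not at hc
  obtain ⟨a, ha, b, hb, c, hc, hab, hac, hbc⟩ := Finset.two_lt_card.1 hc
  rcases lt_or_gt_of_ne hab with h1 | h1 <;> rcases lt_or_gt_of_ne hac with h2 | h2 <;>
    rcases lt_or_gt_of_ne hbc with h3 | h3
  · exact h a ha b hb c hc h1 h3
  · exact h a ha c hc b hb h2 h3
  · linarith
  · exact h c hc a ha b hb h2 h1
  · exact h b hb a ha c hc h1 h2
  · linarith
  · exact h b hb c hc a ha h3 h2
  · exact h c hc b hb a ha h3 h1

theorem inc_lemma {ι : Type*} (V : Finset (ℝ × ℝ)) (I : Finset ι) (F : ι → ℝ → ℝ)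
    (hF : ∀ i ∈ I, Continuous (F i))
    (h3 : ∀ i ∈ I, ∀ i' ∈ I, i ≠ i' → ∀ x y z, x < y → y < z → F i x = F i' x →
      F i y = F i' y → F i z = F i' z → False)
    (E : Finset (ι × (ℝ × ℝ))) (hE : E ⊆ edges0 V I F)
    (hsimple : ∀ e ∈ E, ∀ e' ∈ E, e.2 = e'.2 → nxt V (F e.1) e.2 = nxt V (F e'.1) e'.2 → e = e')
    (A : Finset ((ι × (ℝ × ℝ)) × (ι × (ℝ × ℝ))))
    (hA : ∀ e ∈ E, ∀ e' ∈ E, e.1 ≠ e'.1 → ∀ x, e.2.1 < x → x < (nxt V (F e.1) e.2).1 →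
      e'.2.1 < x → x < (nxt V (F e'.1) e'.2).1 → F e.1 x = F e'.1 x →
      (e.2 = e'.2 ∨ nxt V (F e.1) e.2 = nxt V (F e'.1) e'.2) → (e, e') ∈ A)
    (M : ℕ) (hM : 0 < M) :
    E.card * M ^ 2 ≤ 3 * V.card * M ^ 3 + A.card * M + 2 * I.card ^ 2 := by
  classical
  set Cr : (ι × (ℝ × ℝ)) × (ι × (ℝ × ℝ)) → Prop := fun p => p.1.1 ≠ p.2.1 ∧ ∃ x, p.1.2.1 < x ∧
    x < (nxt V (F p.1.1) p.1.2).1 ∧ p.2.2.1 < x ∧ x < (nxt V (F p.2.1) p.2.2).1 ∧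
    F p.1.1 x = F p.2.1 x with hCr
  set X := (E ×ˢ E).filter Cr with hX
  have hne : ∀ e ∈ E, ∀ e' ∈ E, e ≠ e' → ∀ x, e.2.1 < x → x < (nxt V (F e.1) e.2).1 →
      e'.2.1 < x → x < (nxt V (F e'.1) e'.2).1 → e.1 ≠ e'.1 := by
    rintro ⟨i, u⟩ he ⟨i', u'⟩ he' hne x h1 h2 h3 h4 heq
    dsimp only at *
    subst heq
    exact hne (by rw [edges0_unique (hE he) (hE he') h1 h2 h3 h4])
  have key := cl_crossing V E (fun e => F e.1) (fun e => e.2) (fun e => nxt V (F e.1) e.2)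
    (fun e he => hF _ (mem_edges0.1 (hE he)).1)
    (fun e he => (mem_edges0.1 (hE he)).2.1)
    (fun e he => (nxt_spec (mem_edges0.1 (hE he)).2.2.2).1)
    (fun e he => (nxt_spec (mem_edges0.1 (hE he)).2.2.2).2.1)
    (fun e he => (mem_edges0.1 (hE he)).2.2.1)
    (fun e he => (nxt_spec (mem_edges0.1 (hE he)).2.2.2).2.2.1)
    (by
      intro e he z hz h1 h2 h3
      have := (nxt_spec (mem_edges0.1 (hE he)).2.2.2).2.2.2 z hz h1 h3
      linarith)
    hsimple M hM A X (by
      intro e he e' he' hn x h1 h2 h3 h4 h5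
      have hi := hne e he e' he' hn x h1 h2 h3 h4
      exact ⟨fun h => hA e he e' he' hi x h1 h2 h3 h4 h5 h, fun _ _ =>
        Finset.mem_filter.2 ⟨Finset.mem_product.2 ⟨he, he'⟩, hi, x, h1, h2, h3, h4, h5⟩⟩)
  have hXc : X.card ≤ 2 * I.card ^ 2 := by
    have h1 : X.card ≤ 2 * (X.image (fun p => (p.1.1, p.2.1))).card := by
      apply Finset.card_le_mul_card_image
      rintro ⟨i, i'⟩ hii
      obtain ⟨p0, hp0, hp0e⟩ := Finset.mem_image.1 hii
      obtain ⟨hp0E, hp0n, -⟩ := Finset.mem_filter.1 hp0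
      obtain ⟨q1, q2⟩ := Finset.mem_product.1 hp0E
      obtain ⟨rfl, rfl⟩ := Prod.mk.inj hp0e
      have iI := (mem_edges0.1 (hE q1)).1
      have iI' := (mem_edges0.1 (hE q2)).1
      set S := X.filter (fun p => (p.1.1, p.2.1) = (p0.1.1, p0.2.1)) with hS
      have hSx : ∀ p ∈ S, ∃ x, p.1 ∈ E ∧ p.2 ∈ E ∧ p.1.1 = p0.1.1 ∧ p.2.1 = p0.2.1 ∧ p.1.2.1 < x ∧
          x < (nxt V (F p.1.1) p.1.2).1 ∧ p.2.2.1 < x ∧ x < (nxt V (F p.2.1) p.2.2).1 ∧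
          F p.1.1 x = F p.2.1 x := by
        intro p hp
        obtain ⟨hp1, hp2⟩ := Finset.mem_filter.1 hp
        obtain ⟨hp3, hp4, x, hx⟩ := Finset.mem_filter.1 hp1
        obtain ⟨hp5, hp6⟩ := Finset.mem_product.1 hp3
        obtain ⟨e1, e2⟩ := Prod.mk.inj hp2
        exact ⟨x, hp5, hp6, e1, e2, hx⟩
      choose! ξ k1 k2 k3 k4 k5 k6 k7 k8 k9 using hSx
      have hinj : Set.InjOn ξ S := by
        rintro ⟨⟨i, u⟩, ⟨i', u'⟩⟩ hp ⟨⟨j, w⟩, ⟨j', w'⟩⟩ hq heq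
        have e3 := k3 _ hp
        have e4 := k4 _ hp
        have e3' := k3 _ hq
        have e4' := k4 _ hq
        have r1 := k1 _ hp
        have r2 := k2 _ hp
        have r1' := k1 _ hq
        have r2' := k2 _ hq
        have r5 := k5 _ hp
        have r6 := k6 _ hp
        have r7 := k7 _ hp
        have r8 := k8 _ hp
        have r5' := k5 _ hq
        have r6' := k6 _ hq
        have r7' := k7 _ hq
        have r8' := k8 _ hq
        rw [← heq] at r5' r6' r7' r8'
        dsimp only at e3 e4 e3' e4' r1 r2 r1' r2' r5 r6 r7 r8 r5' r6' r7' r8'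
        have hij : i = j := e3.trans e3'.symm
        have hij' : i' = j' := e4.trans e4'.symm
        subst hij hij'
        rw [edges0_unique (hE r1) (hE r1') r5 r6 r5' r6',
          edges0_unique (hE r2) (hE r2') r7 r8 r7' r8']
      rw [← Finset.card_image_of_injOn hinj]
      apply card_le_two_of_no_three
      have hag : ∀ x ∈ S.image ξ, F p0.1.1 x = F p0.2.1 x := by
        intro x hx
        obtain ⟨p, hp, rfl⟩ := Finset.mem_image.1 hx
        rw [← k3 p hp, ← k4 p hp]
        exact k9 p hp
      intro x hx y hy z hz hxy hyz
      exact h3 _ iI _ iI' hp0n x y z hxy hyz (hag x hx) (hag y hy) (hag z hz)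
    have h2 : (X.image (fun p => (p.1.1, p.2.1))).card ≤ I.card ^ 2 := by
      rw [pow_two, ← Finset.card_product]
      apply Finset.card_le_card
      intro q hq
      obtain ⟨p, hp, rfl⟩ := Finset.mem_image.1 hq
      obtain ⟨hp3, -⟩ := Finset.mem_filter.1 hp
      obtain ⟨q1, q2⟩ := Finset.mem_product.1 hp3
      exact Finset.mem_product.2 ⟨(mem_edges0.1 (hE q1)).1, (mem_edges0.1 (hE q2)).1⟩
    omega
  omega

/-- Szemeredi--Trotter in parametric form -/
theorem st_lines (V S : Finset (ℝ × ℝ)) (M : ℕ) (hM : 0 < M) :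
    (incs V S (fun l x => l.1 * x + l.2)).card * M ^ 2 ≤
      S.card * M ^ 2 + 3 * V.card * M ^ 3 + 2 * S.card ^ 2 := by
  classical
  have two : ∀ l l' : ℝ × ℝ, l ≠ l' → ∀ x y : ℝ, x < y → l.1 * x + l.2 = l'.1 * x + l'.2 →
      l.1 * y + l.2 = l'.1 * y + l'.2 → False := by
    intro l l' hne x y hxy h1 h2
    have h3 : (l.1 - l'.1) * (y - x) = 0 := by linarith
    have h4 : l.1 = l'.1 := by
      rcases mul_eq_zero.1 h3 with h | h <;> linarith
    exact hne (Prod.ext h4 (by rw [h4] at h1; linarith))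
  have key := inc_lemma V S (fun l x => l.1 * x + l.2) (fun l _ => by fun_prop)
    (fun l _ l' _ hne x y z hxy hyz h1 h2 _ => two l l' hne x y hxy h1 h2)
    (edges0 V S (fun l x => l.1 * x + l.2)) (Finset.Subset.refl _)
    (by
      rintro ⟨i, u⟩ he ⟨i', u'⟩ he' h1 h2
      dsimp only at h1 h2
      subst h1
      by_contra hne
      have s := mem_edges0.1 he
      have s' := mem_edges0.1 he'
      have t := nxt_spec s.2.2.2
      have t' := nxt_spec s'.2.2.2
      dsimp only at s s' t t'
      rw [← h2] at t'
      exact two i i' (fun h => hne (by rw [h])) u.1 _ t.2.1 (by rw [s.2.2.1, s'.2.2.1])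
        (by rw [t.2.2.1, t'.2.2.1]))
    ∅ (by
      rintro ⟨i, u⟩ he ⟨i', u'⟩ he' hne x h1 h2 h3 h4 h5 h6
      exfalso
      have s := mem_edges0.1 he
      have s' := mem_edges0.1 he'
      have t := nxt_spec s.2.2.2
      have t' := nxt_spec s'.2.2.2
      dsimp only at *
      rcases h6 with h6 | h6
      · subst h6
        exact two i i' hne u.1 x h1 (by rw [s.2.2.1, s'.2.2.1]) h5
      · rw [← h6] at t'
        exact two i i' hne x _ h2 h5 (by rw [t.2.2.1, t'.2.2.1])) M hM
  have h2 := card_edges0 V S (fun l x => l.1 * x + l.2)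
  have h3 := Nat.mul_le_mul_right (M ^ 2) h2
  simp only [Finset.card_empty, zero_mul, add_zero] at key
  rw [add_mul] at h3
  omega


noncomputable def crv (i : (ℝ × ℝ) × ℝ) (s : ℝ) : ℝ := i.1.2 - s * i.1.1 - i.2 * √(1 + s ^ 2)

noncomputable def kap (p : (ℝ × ℝ) × (ℝ × ℝ)) : ℝ := -(p.1.1 - p.2.1) / (p.1.2 - p.2.2)

theorem crv_cont (i : (ℝ × ℝ) × ℝ) : Continuous (crv i) := by
  unfold crv; fun_prop

theorem crv_sqrt_pos (s : ℝ) : 0 < √(1 + s ^ 2) := by positivity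

theorem crv_delta {a : ℝ × ℝ} {d d' s : ℝ} (h : crv (a, d) s = crv (a, d') s) : d = d' := by
  unfold crv at h
  have := crv_sqrt_pos s
  have h2 : d * √(1 + s ^ 2) = d' * √(1 + s ^ 2) := by dsimp only at h; linarith
  exact mul_right_cancel₀ this.ne' h2

theorem crv_rolle {a a' : ℝ × ℝ} {d d' s s' : ℝ} (hne : a ≠ a') (hs : s < s')
    (h : crv (a, d) s = crv (a', d') s) (h' : crv (a, d) s' = crv (a', d') s') :
    s < kap (a, a') ∧ kap (a, a') < s' := by
  set al := a.1 - a'.1 with hal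
  set be := a.2 - a'.2 with hbe
  set g : ℝ → ℝ := fun x => (be - x * al) / √(1 + x ^ 2) with hg
  have hd : ∀ x, HasDerivAt g (((0 - 1 * al) * √(1 + x ^ 2) -
      (be - x * al) * ((2 * x) / (2 * √(1 + x ^ 2)))) / (√(1 + x ^ 2)) ^ 2) x := by
    intro x
    have h1 : HasDerivAt (fun x : ℝ => 1 + x ^ 2) (2 * x) x := by
      simpa using (hasDerivAt_pow 2 x).const_add 1
    have h2 := h1.sqrt (by positivity)
    have h3 : HasDerivAt (fun x : ℝ => be - x * al) (0 - 1 * al) x :=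
      (hasDerivAt_const x be).sub ((hasDerivAt_id x).mul_const al)
    exact h3.div h2 (crv_sqrt_pos x).ne'
  have key : ∀ x, crv (a, d) x = crv (a', d') x → g x = d - d' := by
    intro x hx
    unfold crv at hx
    rw [hg]
    dsimp only at hx ⊢
    rw [div_eq_iff (crv_sqrt_pos x).ne']
    rw [hal, hbe]; linarith
  obtain ⟨c, ⟨hc1, hc2⟩, hc⟩ := exists_hasDerivAt_eq_zero (f := g) hs
    (fun x _ => (hd x).continuousAt.continuousWithinAt) ((key s h).trans (key s' h').symm)
    (fun x _ => hd x)
  have hp := crv_sqrt_pos c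
  have hq : √(1 + c ^ 2) ^ 2 = 1 + c ^ 2 := Real.sq_sqrt (by positivity)
  have h0 : al + be * c = 0 := by
    rw [div_eq_zero_iff] at hc
    rcases hc with hc | hc
    · field_simp at hc
      rw [hq] at hc
      linarith
    · rw [hq] at hc; nlinarith [sq_nonneg c]
  have hb : be ≠ 0 := by
    intro hb
    rw [hb] at h0
    apply hne
    ext
    · linarith
    · linarith
  have : kap (a, a') = c := by
    unfold kap
    dsimp only
    rw [← hal, ← hbe, div_eq_iff hb]; linarith
  rw [this]; exact ⟨hc1, hc2⟩

theorem window (W r : ℕ) (hW : 0 < W) {α : Type*} (κ : α → ℝ) :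
    ∀ (V0 : Finset (ℝ × ℝ)) (K : Finset α), W * r ≤ V0.card →
    ∃ V ⊆ V0, V.card = r ∧ ∀ K' ⊆ K, (∀ k ∈ K', ∃ v ∈ V, ∃ v' ∈ V, v.1 < κ k ∧ κ k < v'.1) →
      K'.card * W ≤ K.card := by
  classical
  induction W with
  | zero => omega
  | succ W ih =>
    intro V0 K hV
    -- lowest r elements
    have low : ∀ r, r ≤ V0.card → ∃ V ⊆ V0, V.card = r ∧ ∀ v ∈ V, ∀ w ∈ V0 \ V, v.1 ≤ w.1 := by
      intro r
      induction r with
      | zero => intro _; exact ⟨∅, by simp, by simp, by simp⟩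
      | succ r ihr =>
        intro hr
        obtain ⟨V, h1, h2, h3⟩ := ihr (by omega)
        have hne : (V0 \ V).Nonempty := by
          rw [← Finset.card_pos, Finset.card_sdiff_of_subset h1]; omega
        obtain ⟨w, hw, hmin⟩ := (V0 \ V).exists_min_image (fun w => w.1) hne
        obtain ⟨w1, w2⟩ := Finset.mem_sdiff.1 hw
        refine ⟨insert w V, Finset.insert_subset w1 h1, by rw [Finset.card_insert_of_notMem w2, h2], ?_⟩
        intro v hv x hx
        obtain ⟨x1, x2⟩ := Finset.mem_sdiff.1 hx
        have x3 : x ∈ V0 \ V := Finset.mem_sdiff.2 ⟨x1, fun h => x2 (Finset.mem_insert_of_mem h)⟩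
        rcases Finset.mem_insert.1 hv with rfl | hv
        · exact hmin x x3
        · exact h3 v hv x x3
    obtain ⟨V, h1, h2, h3⟩ := low r (by nlinarith)
    set K1 := K.filter (fun k => ∃ v ∈ V, ∃ v' ∈ V, v.1 < κ k ∧ κ k < v'.1) with hK1
    by_cases hc : K1.card * (W + 1) ≤ K.card
    · refine ⟨V, h1, h2, ?_⟩
      intro K' hK' hh
      have : K' ⊆ K1 := fun k hk => Finset.mem_filter.2 ⟨hK' hk, hh k hk⟩
      exact le_trans (Nat.mul_le_mul_right _ (Finset.card_le_card this)) hc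
    · rcases Nat.eq_zero_or_pos W with rfl | hWp
      · exfalso; apply hc; simpa using Finset.card_le_card (Finset.filter_subset _ _)
      have hcard : (V0 \ V).card = V0.card - r := by rw [Finset.card_sdiff_of_subset h1, h2]
      have hcK : (K \ K1).card = K.card - K1.card := by
        rw [Finset.card_sdiff_of_subset (Finset.filter_subset _ _)]
      have hle : K1.card ≤ K.card := Finset.card_le_card (Finset.filter_subset _ _)
      obtain ⟨U, u1, u2, u3⟩ := ih hWp (V0 \ V) (K \ K1) (by
        rw [hcard]; apply Nat.le_sub_of_add_le; nlinarith)
      refine ⟨U, fun x hx => (Finset.mem_sdiff.1 (u1 hx)).1, u2, ?_⟩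
      intro K' hK' hh
      have hsub : K' ⊆ K \ K1 := by
        intro k hk
        refine Finset.mem_sdiff.2 ⟨hK' hk, ?_⟩
        intro hk1
        obtain ⟨_, v, hv, v', hv', q1, q2⟩ := Finset.mem_filter.1 hk1
        obtain ⟨w, hw, w', hw', p1, p2⟩ := hh k hk
        have := h3 v' hv' w (u1 hw)
        linarith
      have := u3 K' hsub hh
      rw [hcK] at this
      have t1 : K'.card * W + K1.card ≤ K.card := by omega
      push Not at hc
      -- K1 (W+1) > K ; K' W ≤ K - K1
      have t2 : (K'.card * W) * (W + 1) < K.card * W := by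
        have : (K'.card * W + K1.card) * (W + 1) ≤ K.card * (W + 1) := Nat.mul_le_mul_right _ t1
        nlinarith
      have t3 : (K'.card * (W + 1)) * W < K.card * W := by nlinarith
      exact (Nat.lt_of_mul_lt_mul_right t3).le


theorem crv_three {i i' : (ℝ × ℝ) × ℝ} (hne : i ≠ i') {x y z : ℝ} (hxy : x < y) (hyz : y < z)
    (h1 : crv i x = crv i' x) (h2 : crv i y = crv i' y) (h3 : crv i z = crv i' z) : False := by
  obtain ⟨a, d⟩ := i
  obtain ⟨a', d'⟩ := i'
  by_cases ha : a = a'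
  · subst ha
    exact hne (by rw [crv_delta h1])
  · have := (crv_rolle ha hxy h1 h2).2
    have := (crv_rolle ha hyz h2 h3).1
    linarith

theorem edges0_unique_right {ι : Type*} {V : Finset (ℝ × ℝ)} {I : Finset ι} {F : ι → ℝ → ℝ}
    {i : ι} {u u' : ℝ × ℝ} (h : (i, u) ∈ edges0 V I F) (h' : (i, u') ∈ edges0 V I F)
    (hn : nxt V (F i) u = nxt V (F i) u') : u = u' := by
  have a := (nxt_spec (mem_edges0.1 h).2.2.2).2.1
  have b := (nxt_spec (mem_edges0.1 h').2.2.2).2.1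
  dsimp only at a b
  obtain ⟨x, hx1, hx2⟩ := exists_between (max_lt a (hn ▸ b))
  have := max_lt_iff.1 hx1
  exact edges0_unique h h' this.1 hx2 this.2 (hn ▸ hx2)

theorem many_lines (A : Finset (ℝ × ℝ)) (Δ : Finset ℝ) (V0 : Finset (ℝ × ℝ))
    (h : ∀ a ∈ A, ∀ v ∈ V0, ∃ d ∈ Δ, crv (a, d) v.1 = v.2) (M r : ℕ) (hM : 0 < M)
    (hA : A.card = 24 * M) (hr : 400 * r ≤ V0.card) (hq : 2 * (24 * M + 1) * Δ.card ≤ r) :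
    r * M ≤ 200 * Δ.card ^ 2 := by
  classical
  obtain ⟨V, hV0, hVr, hwin⟩ := window 400 r (by norm_num) kap V0 (A ×ˢ A) hr
  set I := A ×ˢ Δ with hI
  have hIc : I.card = 24 * M * Δ.card := by rw [hI, Finset.card_product, hA]
  have hinc : 24 * M * r ≤ (incs V I crv).card := by
    choose! δ h1 h2 using h
    rw [← hA, ← hVr, ← Finset.card_product]
    apply Finset.card_le_card_of_injOn (fun p => ((p.1, δ p.1 p.2), p.2))
    · intro p hp
      obtain ⟨p1, p2⟩ := Finset.mem_product.1 hp
      exact mem_incs.2 ⟨Finset.mem_product.2 ⟨p1, h1 _ p1 _ (hV0 p2)⟩, p2, h2 _ p1 _ (hV0 p2)⟩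
    · rintro ⟨a, v⟩ _ ⟨a', v'⟩ _ heq
      simp only [Prod.mk.injEq] at heq ⊢
      exact ⟨heq.1.1, heq.2⟩
  have hed := card_edges0 V I crv
  set E0 := edges0 V I crv with hE0
  set B := E0.filter (fun e => ∃ e' ∈ E0, e' ≠ e ∧ e.2 = e'.2 ∧
    nxt V (crv e.1) e.2 = nxt V (crv e'.1) e'.2) with hB
  -- basic facts on edges
  have basic : ∀ e ∈ E0, e.1.1 ∈ A ∧ e.1.2 ∈ Δ ∧ e.2 ∈ V ∧ crv e.1 e.2.1 = e.2.2 ∧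
      nxt V (crv e.1) e.2 ∈ V ∧ e.2.1 < (nxt V (crv e.1) e.2).1 ∧
      crv e.1 (nxt V (crv e.1) e.2).1 = (nxt V (crv e.1) e.2).2 := by
    intro e he
    obtain ⟨a1, a2, a3, a4⟩ := mem_edges0.1 he
    obtain ⟨b1, b2, b3, _⟩ := nxt_spec a4
    exact ⟨(Finset.mem_product.1 a1).1, (Finset.mem_product.1 a1).2, a2, a3, b1, b2, b3⟩
  have hBc : B.card ≤ I.card * A.card := by
    have : ∀ e ∈ B, ∃ a' ∈ A, e.2.1 < kap (e.1.1, a') ∧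
        kap (e.1.1, a') < (nxt V (crv e.1) e.2).1 := by
      intro e he
      obtain ⟨he0, e', he', hne, q1, q2⟩ := Finset.mem_filter.1 he
      obtain ⟨a1, a2, a3, a4, a5, a6, a7⟩ := basic e he0
      obtain ⟨b1, b2, b3, b4, b5, b6, b7⟩ := basic e' he'
      have g1 : crv (e.1.1, e.1.2) e.2.1 = crv (e'.1.1, e'.1.2) e.2.1 := by
        show crv e.1 e.2.1 = crv e'.1 e.2.1
        rw [a4, q1, b4]
      have g2 : crv (e.1.1, e.1.2) (nxt V (crv e.1) e.2).1 =
          crv (e'.1.1, e'.1.2) (nxt V (crv e.1) e.2).1 := by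
        show crv e.1 _ = crv e'.1 _
        rw [a7, q2, b7]
      refine ⟨e'.1.1, b1, crv_rolle ?_ a6 g1 g2⟩
      intro heq
      apply hne
      rw [← heq] at g1
      exact Prod.ext (Prod.ext heq.symm (crv_delta g1).symm) q1.symm
    choose! f f1 f2 f3 using this
    rw [← Finset.card_product]
    apply Finset.card_le_card_of_injOn (fun e => (e.1, f e))
    · intro e he
      exact Finset.mem_product.2 ⟨(mem_edges0.1 (Finset.mem_filter.1 he).1).1, f1 e he⟩
    · rintro ⟨i, u⟩ he ⟨i', u'⟩ he' heq
      simp only [Prod.mk.injEq] at heq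
      obtain ⟨rfl, heq⟩ := heq
      have k1 := f2 _ he
      have k2 := f3 _ he
      have k3 := f2 _ he'
      have k4 := f3 _ he'
      rw [← heq] at k3 k4
      rw [edges0_unique (Finset.mem_filter.1 he).1 (Finset.mem_filter.1 he').1 k1 k2 k3 k4]
  set E := E0 \ B with hE
  have hEc : E0.card ≤ E.card + B.card := by
    have : E0.card - B.card ≤ E.card := Finset.le_card_sdiff B E0
    omega
  set K := (A ×ˢ A).filter (fun k => ∃ v ∈ V, ∃ v' ∈ V, v.1 < kap k ∧ kap k < v'.1) with hK
  have hKc := hwin K (Finset.filter_subset _ _) (fun k hk => (Finset.mem_filter.1 hk).2)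
  set Ad := (E ×ˢ E).filter (fun p => (p.1.1.1, p.2.1.1) ∈ K ∧
    (p.1.2 = p.2.2 ∨ nxt V (crv p.1.1) p.1.2 = nxt V (crv p.2.1) p.2.2)) with hAd
  have hEE : ∀ e ∈ E, e ∈ E0 := fun e he => (Finset.mem_sdiff.1 he).1
  have hAdc : Ad.card ≤ 2 * (r * K.card) := by
    set AdL := Ad.filter (fun p => p.1.2 = p.2.2) with hL
    set AdR := Ad.filter (fun p => nxt V (crv p.1.1) p.1.2 = nxt V (crv p.2.1) p.2.2) with hR
    have c0 : Ad ⊆ AdL ∪ AdR := by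
      intro p hp
      rcases (Finset.mem_filter.1 hp).2.2 with h | h
      · exact Finset.mem_union_left _ (Finset.mem_filter.2 ⟨hp, h⟩)
      · exact Finset.mem_union_right _ (Finset.mem_filter.2 ⟨hp, h⟩)
    have cL : AdL.card ≤ r * K.card := by
      rw [← hVr, ← Finset.card_product]
      apply Finset.card_le_card_of_injOn (fun p => (p.1.2, (p.1.1.1, p.2.1.1)))
      · intro p hp
        have hp := Finset.mem_filter.1 hp
        have hp1 := Finset.mem_filter.1 hp.1
        have hp2 := Finset.mem_product.1 hp1.1
        exact Finset.mem_product.2 ⟨(basic _ (hEE _ hp2.1)).2.2.1, hp1.2.1⟩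
      · rintro ⟨⟨⟨a, d⟩, u⟩, ⟨⟨b, e⟩, w⟩⟩ hp ⟨⟨⟨a', d'⟩, u'⟩, ⟨⟨b', e'⟩, w'⟩⟩ hp' heq
        have hp := Finset.mem_filter.1 hp
        have hp1 := Finset.mem_filter.1 hp.1
        have hp2 := Finset.mem_product.1 hp1.1
        have hp' := Finset.mem_filter.1 hp'
        have hp1' := Finset.mem_filter.1 hp'.1
        have hp2' := Finset.mem_product.1 hp1'.1
        simp only [Prod.mk.injEq] at heq
        obtain ⟨rfl, rfl, rfl⟩ := heq
        have e1 := hp.2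
        have e2 := hp'.2
        dsimp only at e1 e2
        subst e1
        subst e2
        have y1 := (basic _ (hEE _ hp2.1)).2.2.2.1
        have y2 := (basic _ (hEE _ hp2.2)).2.2.2.1
        have y1' := (basic _ (hEE _ hp2'.1)).2.2.2.1
        have y2' := (basic _ (hEE _ hp2'.2)).2.2.2.1
        dsimp only at y1 y2 y1' y2'
        rw [crv_delta (y1.trans y1'.symm), crv_delta (y2.trans y2'.symm)]
    have cR : AdR.card ≤ r * K.card := by
      rw [← hVr, ← Finset.card_product]
      apply Finset.card_le_card_of_injOn
        (fun p => (nxt V (crv p.1.1) p.1.2, (p.1.1.1, p.2.1.1)))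
      · intro p hp
        have hp := Finset.mem_filter.1 hp
        have hp1 := Finset.mem_filter.1 hp.1
        have hp2 := Finset.mem_product.1 hp1.1
        exact Finset.mem_product.2 ⟨(basic _ (hEE _ hp2.1)).2.2.2.2.1, hp1.2.1⟩
      · rintro ⟨⟨⟨a, d⟩, u⟩, ⟨⟨b, e⟩, w⟩⟩ hp ⟨⟨⟨a', d'⟩, u'⟩, ⟨⟨b', e'⟩, w'⟩⟩ hp' heq
        have hp := Finset.mem_filter.1 hp
        have hp1 := Finset.mem_filter.1 hp.1
        have hp2 := Finset.mem_product.1 hp1.1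
        have hp' := Finset.mem_filter.1 hp'
        have hp1' := Finset.mem_filter.1 hp'.1
        have hp2' := Finset.mem_product.1 hp1'.1
        simp only [Prod.mk.injEq] at heq
        obtain ⟨heq, rfl, rfl⟩ := heq
        have e1 := hp.2
        have e2 := hp'.2
        dsimp only at e1 e2
        have y1 := (basic _ (hEE _ hp2.1)).2.2.2.2.2.2
        have y2 := (basic _ (hEE _ hp2.2)).2.2.2.2.2.2
        have y1' := (basic _ (hEE _ hp2'.1)).2.2.2.2.2.2
        have y2' := (basic _ (hEE _ hp2'.2)).2.2.2.2.2.2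
        dsimp only at y1 y2 y1' y2'
        have e3 := e1.symm.trans (heq.trans e2)
        rw [← heq] at y1'
        rw [← e3] at y2'
        have z1 := crv_delta (y1.trans y1'.symm)
        have z2 := crv_delta (y2.trans y2'.symm)
        subst z1
        subst z2
        rw [edges0_unique_right (hEE _ hp2.1) (hEE _ hp2'.1) heq,
          edges0_unique_right (hEE _ hp2.2) (hEE _ hp2'.2) e3]
    have := Finset.card_le_card c0
    have := Finset.card_union_le AdL AdR
    omega
  have main := inc_lemma V I crv (fun i _ => crv_cont i)
    (fun i _ i' _ hne x y z hxy hyz h1 h2 h3 => crv_three hne hxy hyz h1 h2 h3) E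
    (fun e he => hEE e he) (by
      intro e he e' he' h1 h2
      by_contra hne
      exact (Finset.mem_sdiff.1 he).2 (Finset.mem_filter.2
        ⟨hEE e he, e', hEE e' he', fun h => hne h.symm, h1, h2⟩)) Ad (by
      intro e he e' he' hne x hx1 hx2 hx3 hx4 hx hor
      refine Finset.mem_filter.2 ⟨Finset.mem_product.2 ⟨he, he'⟩, ?_, hor⟩
      obtain ⟨a1, a2, a3, a4, a5, a6, a7⟩ := basic e (hEE e he)
      obtain ⟨b1, b2, b3, b4, b5, b6, b7⟩ := basic e' (hEE e' he')
      have hna : e.1.1 ≠ e'.1.1 := by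
        intro heq
        have hx' : crv (e.1.1, e.1.2) x = crv (e'.1.1, e'.1.2) x := hx
        rw [← heq] at hx'
        exact hne (Prod.ext heq (crv_delta hx'))
      refine Finset.mem_filter.2 ⟨Finset.mem_product.2 ⟨a1, b1⟩, e.2, a3, _, a5, ?_⟩
      rcases hor with hor | hor
      · have g1 : crv (e.1.1, e.1.2) e.2.1 = crv (e'.1.1, e'.1.2) e.2.1 := by
          show crv e.1 e.2.1 = crv e'.1 e.2.1
          rw [a4, hor, b4]
        have := crv_rolle hna hx1 g1 hx
        exact ⟨this.1, this.2.trans hx2⟩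
      · have g2 : crv (e.1.1, e.1.2) (nxt V (crv e.1) e.2).1 =
            crv (e'.1.1, e'.1.2) (nxt V (crv e.1) e.2).1 := by
          show crv e.1 _ = crv e'.1 _
          rw [a7, hor, b7]
        have := crv_rolle hna hx2 hx g2
        exact ⟨hx1.trans this.1, this.2⟩) M hM
  rw [Finset.card_product, hA] at hKc
  rw [hIc, hVr] at main
  rw [hIc] at hBc hed
  rw [hA] at hBc
  set D := Δ.card
  -- final arithmetic
  have k1 : 24 * M * r ≤ 2 * E.card := by
    have : 24 * M * (2 * (24 * M + 1) * D) ≤ 24 * M * r := Nat.mul_le_mul_left _ hq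
    nlinarith
  have k2 : 400 * (Ad.card * M) ≤ 2 * r * (24 * M * (24 * M)) * M := by
    have : 2 * r * (K.card * 400) ≤ 2 * r * (24 * M * (24 * M)) := Nat.mul_le_mul_left _ hKc
    calc 400 * (Ad.card * M) = 400 * Ad.card * M := by ring
      _ ≤ _ := Nat.mul_le_mul_right _ (by nlinarith)
  have k3 : 24 * M * r * M ^ 2 ≤ 2 * E.card * M ^ 2 := Nat.mul_le_mul_right _ k1
  have k4 : M ^ 2 * (612 * (r * M)) ≤ M ^ 2 * (115200 * D ^ 2) := by nlinarith
  have k5 := Nat.le_of_mul_le_mul_left k4 (by positivity)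
  nlinarith


open Classical in
noncomputable def onl (P : Finset (ℝ × ℝ)) (l : ℝ × ℝ) : Finset (ℝ × ℝ) :=
  P.filter (fun p => l.1 * p.1 + l.2 = p.2)

theorem incs_ge (P T : Finset (ℝ × ℝ)) (k : ℕ) (h : ∀ l ∈ T, k ≤ (onl P l).card) :
    T.card * k ≤ (incs P T (fun l x => l.1 * x + l.2)).card := by
  classical
  rw [Finset.card_eq_sum_card_fiberwise (f := Prod.fst) (t := T)
    (fun p hp => (mem_incs.1 hp).1), ← smul_eq_mul]
  apply Finset.card_nsmul_le_sum
  intro l hl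
  refine (h l hl).trans ?_
  apply Finset.card_le_card_of_injOn (fun p => (l, p))
  · intro p hp
    have := Finset.mem_filter.1 hp
    exact Finset.mem_coe.2 (Finset.mem_filter.2 ⟨mem_incs.2 ⟨hl, this.1, this.2⟩, rfl⟩)
  · intro p _ q _ h
    exact (Prod.mk.inj h).2

theorem rich (P T : Finset (ℝ × ℝ)) (k : ℕ) (hk : 4 ≤ k) (hP : 0 < P.card)
    (h : ∀ l ∈ T, k ≤ (onl P l).card) :
    (T.card : ℝ) * k ^ 2 ≤ 1536 * (P.card : ℝ) ^ 2 / k + 8 * P.card * k := by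
  have h1 := incs_ge P T k h
  set m := P.card
  set t := T.card
  have hm : (0 : ℝ) < m := by exact_mod_cast hP
  have hkr : (4 : ℝ) ≤ k := by exact_mod_cast hk
  have hst : ∀ M : ℕ, 0 < M → (t : ℝ) * k * M ^ 2 ≤ 4 * m * M ^ 3 + 3 * t ^ 2 := by
    intro M hM
    have h2 := st_lines P T M hM
    have h3 : t * k * M ^ 2 ≤ t * M ^ 2 + 3 * m * M ^ 3 + 2 * t ^ 2 :=
      (Nat.mul_le_mul_right _ h1).trans h2
    have h4 : (t : ℝ) * k * M ^ 2 ≤ t * M ^ 2 + 3 * m * M ^ 3 + 2 * t ^ 2 := by exact_mod_cast h3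
    have h5 : (t : ℝ) * M ^ 2 * 4 ≤ t * M ^ 2 * k := by gcongr
    have : (0:ℝ) ≤ m * M ^ 3 := by positivity
    nlinarith [sq_nonneg (t:ℝ)]
  clear_value m t
  by_cases hc : (t : ℝ) * k < 8 * m
  · have : (t : ℝ) * k ^ 2 ≤ 8 * m * k := by nlinarith
    have : 0 ≤ 1536 * (m : ℝ) ^ 2 / k := by positivity
    linarith
  · push Not at hc
    obtain ⟨X, hX⟩ : ∃ X : ℝ, X = t * k / (8 * m) := ⟨_, rfl⟩
    have hX1 : 1 ≤ X := by rw [hX, le_div_iff₀ (by positivity)]; linarith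
    have hXm : (t : ℝ) * k = 8 * m * X := by rw [hX]; field_simp
    obtain ⟨M, hM⟩ : ∃ M : ℕ, M = ⌊X⌋₊ := ⟨_, rfl⟩
    have hM0 : 0 < M := hM ▸ Nat.floor_pos.2 hX1
    have hM1 : (M : ℝ) ≤ X := hM ▸ Nat.floor_le (by linarith)
    have hM2 : X < M + 1 := hM ▸ Nat.lt_floor_add_one X
    have hM3 : (1 : ℝ) ≤ M := by exact_mod_cast hM0
    have hM4 : X ≤ 2 * M := by linarith
    have h6 := hst M hM0
    have htp : (0 : ℝ) < t := by
      by_contra hh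
      have : (t : ℝ) = 0 := le_antisymm (not_lt.1 hh) (Nat.cast_nonneg _)
      rw [this] at hc; linarith
    have h7 : 4 * (m : ℝ) * M ^ 3 ≤ t * k * M ^ 2 / 2 := by
      rw [hXm]
      have : (0:ℝ) ≤ m * M ^ 2 * (X - M) := by
        apply mul_nonneg (by positivity); linarith
      nlinarith
    have h8 : (t : ℝ) * (k * M ^ 2) ≤ t * (6 * t) := by nlinarith
    have h9 : (k : ℝ) * M ^ 2 ≤ 6 * t := le_of_mul_le_mul_left h8 htp
    have h10 : (k : ℝ) * X ^ 2 ≤ 24 * t := by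
      have : X ^ 2 ≤ 4 * M ^ 2 := by nlinarith
      nlinarith
    have h11 : (t : ℝ) * (t * k ^ 3) ≤ t * (1536 * m ^ 2) := by
      have : (t : ℝ) * (t * k ^ 3) = k * (t * k) ^ 2 := by ring
      rw [this, hXm]
      have : (64 * (m : ℝ) ^ 2) * (k * X ^ 2) ≤ (64 * (m : ℝ) ^ 2) * (24 * t) := by gcongr
      nlinarith
    have h12 : (t : ℝ) * k ^ 3 ≤ 1536 * m ^ 2 := le_of_mul_le_mul_left h11 htp
    have h13 : (t : ℝ) * k ^ 2 ≤ 1536 * (m : ℝ) ^ 2 / k := by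
      rw [le_div_iff₀ (by linarith)]; nlinarith
    have : (0 : ℝ) ≤ 8 * m * k := by positivity
    linarith

theorem beck_sum (P L : Finset (ℝ × ℝ)) (hP : 0 < P.card) (J : ℕ) (hJ : 18 ≤ J) :
    ((∑ l ∈ L.filter (fun l => (onl P l).card < 2 ^ J), (onl P l).card ^ 2 : ℕ) : ℝ) ≤
      L.card * 2 ^ 36 + 12288 * (P.card : ℝ) ^ 2 * (1 / 2 ^ 18 - 1 / 2 ^ J) +
      32 * P.card * 2 ^ J := by
  induction J, hJ using Nat.le_induction with
  | base =>
    have : ∑ l ∈ L.filter (fun l => (onl P l).card < 2 ^ 18), (onl P l).card ^ 2 ≤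
        L.card * 2 ^ 36 := by
      refine (Finset.sum_le_card_nsmul _ _ (2 ^ 36) ?_).trans ?_
      · intro l hl
        have := (Finset.mem_filter.1 hl).2
        calc (onl P l).card ^ 2 ≤ (2 ^ 18) ^ 2 := Nat.pow_le_pow_left this.le 2
          _ = 2 ^ 36 := by norm_num
      · rw [smul_eq_mul]
        exact Nat.mul_le_mul_right _ (Finset.card_le_card (Finset.filter_subset _ _))
    have h2 : ((∑ l ∈ L.filter (fun l => (onl P l).card < 2 ^ 18), (onl P l).card ^ 2 : ℕ) : ℝ) ≤
        L.card * 2 ^ 36 := by exact_mod_cast this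
    have h3 : (0 : ℝ) ≤ 32 * P.card * 2 ^ 18 := by positivity
    rw [sub_self, mul_zero, add_zero]
    exact h2.trans (le_add_of_nonneg_right h3)
  | succ J hJ ih =>
    set T := L.filter (fun l => 2 ^ J ≤ (onl P l).card ∧ (onl P l).card < 2 ^ (J + 1)) with hT
    have hsplit : L.filter (fun l => (onl P l).card < 2 ^ (J + 1)) ⊆
        L.filter (fun l => (onl P l).card < 2 ^ J) ∪ T := by
      intro l hl
      obtain ⟨h1, h2⟩ := Finset.mem_filter.1 hl
      by_cases h : (onl P l).card < 2 ^ J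
      · exact Finset.mem_union_left _ (Finset.mem_filter.2 ⟨h1, h⟩)
      · exact Finset.mem_union_right _ (Finset.mem_filter.2 ⟨h1, not_lt.1 h, h2⟩)
    have s1 : ∑ l ∈ L.filter (fun l => (onl P l).card < 2 ^ (J + 1)), (onl P l).card ^ 2 ≤
        ∑ l ∈ L.filter (fun l => (onl P l).card < 2 ^ J), (onl P l).card ^ 2 +
        T.card * (2 ^ (J + 1)) ^ 2 := by
      refine (Finset.sum_le_sum_of_subset hsplit).trans ?_
      refine (Finset.sum_union_inter (s₁ := L.filter (fun l => (onl P l).card < 2 ^ J))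
        (s₂ := T) (f := fun l => (onl P l).card ^ 2) ▸ Nat.le_add_right _ _).trans ?_
      gcongr
      rw [← smul_eq_mul]
      apply Finset.sum_le_card_nsmul
      intro l hl
      exact Nat.pow_le_pow_left (Finset.mem_filter.1 hl).2.2.le 2
    have s2 := rich P T (2 ^ J) (by
      calc 4 = 2 ^ 2 := by norm_num
        _ ≤ 2 ^ J := Nat.pow_le_pow_right (by norm_num) (by omega)) hP
      (fun l hl => (Finset.mem_filter.1 hl).2.1)
    have s3 : ((∑ l ∈ L.filter (fun l => (onl P l).card < 2 ^ (J + 1)), (onl P l).card ^ 2 : ℕ) : ℝ)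
      ≤ ((∑ l ∈ L.filter (fun l => (onl P l).card < 2 ^ J), (onl P l).card ^ 2 : ℕ) : ℝ) +
        T.card * (2 ^ (J + 1)) ^ 2 := by exact_mod_cast s1
    push_cast at s2
    push_cast at s3 ih ⊢
    have e1 : (1 : ℝ) / 2 ^ (J + 1) = 1 / 2 ^ J / 2 := by rw [pow_succ]; field_simp
    rw [e1]
    have e2 : (2 : ℝ) ^ (J + 1) = 2 * 2 ^ J := by ring
    rw [e2] at s3 ⊢
    have e3 : 1536 * (P.card : ℝ) ^ 2 / 2 ^ J = 1536 * (P.card : ℝ) ^ 2 * (1 / 2 ^ J) := by ring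
    rw [e3] at s2
    nlinarith


noncomputable def ln (p : (ℝ × ℝ) × (ℝ × ℝ)) : ℝ × ℝ :=
  ((p.2.2 - p.1.2) / (p.2.1 - p.1.1), p.1.2 - (p.2.2 - p.1.2) / (p.2.1 - p.1.1) * p.1.1)

open Classical in
noncomputable def lns (P : Finset (ℝ × ℝ)) : Finset (ℝ × ℝ) :=
  ((P ×ˢ P).filter (fun p => p.1.1 ≠ p.2.1)).image ln

theorem ln_left (p : (ℝ × ℝ) × (ℝ × ℝ)) : (ln p).1 * p.1.1 + (ln p).2 = p.1.2 := by
  unfold ln; dsimp only; ring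

theorem ln_right (p : (ℝ × ℝ) × (ℝ × ℝ)) (h : p.1.1 ≠ p.2.1) :
    (ln p).1 * p.2.1 + (ln p).2 = p.2.2 := by
  unfold ln; dsimp only
  have : p.2.1 - p.1.1 ≠ 0 := fun h' => h (by linarith)
  field_simp; ring

theorem beck (P : Finset (ℝ × ℝ)) (hm : 2 ^ 27 ≤ P.card)
    (hl : ∀ l, (onl P l).card * 1024 ≤ P.card)
    (hv : ∀ x, 2 * (P.filter (fun p => p.1 = x)).card ≤ P.card) :
    P.card ^ 2 ≤ 2 ^ 38 * (lns P).card := by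
  classical
  set Q := (P ×ˢ P).filter (fun p => p.1.1 ≠ p.2.1) with hQ
  have h1 : P.card ^ 2 ≤ 2 * Q.card := by
    have e : (P ×ˢ P).card = Q.card + ((P ×ˢ P).filter (fun p => ¬ p.1.1 ≠ p.2.1)).card :=
      (Finset.card_filter_add_card_filter_not _).symm
    have e2 : 2 * ((P ×ˢ P).filter (fun p => ¬ p.1.1 ≠ p.2.1)).card ≤ P.card * P.card := by
      rw [Finset.card_eq_sum_card_fiberwise (f := Prod.fst) (t := P)
        (fun p hp => (Finset.mem_product.1 (Finset.mem_filter.1 hp).1).1), Finset.mul_sum,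
        ← smul_eq_mul P.card]
      apply Finset.sum_le_card_nsmul
      intro a ha
      refine le_trans (Nat.mul_le_mul_left 2 ?_) (hv a.1)
      apply Finset.card_le_card_of_injOn Prod.snd
      · intro p hp
        simp only [Finset.coe_filter, Set.mem_ofPred_eq, Finset.mem_filter, Finset.mem_product,
          ne_eq, not_not] at hp ⊢
        exact ⟨hp.1.1.2, by rw [← hp.1.2, hp.2]⟩
      · intro p hp q hq h
        have hp := (Finset.mem_filter.1 hp).2
        have hq := (Finset.mem_filter.1 hq).2
        exact Prod.ext (hp.trans hq.symm) h
    rw [Finset.card_product] at e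
    nlinarith
  have h2 : Q.card ≤ ∑ l ∈ lns P, (onl P l).card ^ 2 := by
    rw [Finset.card_eq_sum_card_fiberwise (f := ln) (t := lns P)
      (fun p hp => Finset.mem_coe.2 (Finset.mem_image_of_mem ln hp))]
    apply Finset.sum_le_sum
    intro l _
    rw [pow_two, ← Finset.card_product]
    apply Finset.card_le_card
    intro p hp
    obtain ⟨hp1, rfl⟩ := Finset.mem_filter.1 hp
    obtain ⟨hp2, hp3⟩ := Finset.mem_filter.1 hp1
    obtain ⟨hp4, hp5⟩ := Finset.mem_product.1 hp2
    exact Finset.mem_product.2 ⟨Finset.mem_filter.2 ⟨hp4, ln_left p⟩,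
      Finset.mem_filter.2 ⟨hp5, ln_right p hp3⟩⟩
  set m := P.card with hmdef
  have hmpos : 0 < m := lt_of_lt_of_le (by positivity) hm
  set J := Nat.log 2 (m / 512) with hJdef
  have hd : 2 ^ 18 ≤ m / 512 := by
    rw [Nat.le_div_iff_mul_le (by norm_num)]; exact le_trans (by norm_num) hm
  have hJ : 18 ≤ J := (Nat.le_log_iff_pow_le (by norm_num) (by omega)).2 hd
  have hJ1 : 2 ^ J ≤ m / 512 := Nat.pow_log_le_self 2 (by omega)
  have hJ2 : m / 512 < 2 ^ (J + 1) := Nat.lt_pow_succ_log_self (by norm_num) _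
  have hb := beck_sum P (lns P) hmpos J hJ
  have hfil : (lns P).filter (fun l => (onl P l).card < 2 ^ J) = lns P := by
    apply Finset.filter_true_of_mem
    intro l _
    have := hl l
    rw [pow_succ] at hJ2
    omega
  rw [hfil, ← hmdef] at hb
  set n := (lns P).card
  have h3 : (m : ℝ) ^ 2 ≤ 2 * ((∑ l ∈ lns P, (onl P l).card ^ 2 : ℕ) : ℝ) := by
    exact_mod_cast h1.trans (Nat.mul_le_mul_left 2 h2)
  have h4 : (2 : ℝ) ^ J * 512 ≤ m := by
    have : 2 ^ J * 512 ≤ m := by omega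
    exact_mod_cast this
  have h5 : (0 : ℝ) ≤ 1 / 2 ^ J := by positivity
  have h6 : 12288 * (m : ℝ) ^ 2 * (1 / 2 ^ 18 - 1 / 2 ^ J) ≤ 12288 * (m : ℝ) ^ 2 * (1 / 2 ^ 18) := by
    apply mul_le_mul_of_nonneg_left _ (by positivity)
    linarith
  have h7 : 32 * (m : ℝ) * 2 ^ J ≤ 32 * m * (m / 512) := by
    apply mul_le_mul_of_nonneg_left _ (by positivity)
    linarith
  have h8 : (m : ℝ) ^ 2 ≤ 2 ^ 38 * n := by
    norm_num at *
    nlinarith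
  exact_mod_cast h8


theorem hv_M (k : ℕ) (hk : 0 < k) : ∃ M : ℕ, 0 < M ∧ k ^ 2 ≤ M ^ 3 ∧ M ^ 3 ≤ 8 * k ^ 2 := by
  classical
  have hex : ∃ M : ℕ, k ^ 2 ≤ M ^ 3 := ⟨k, Nat.pow_le_pow_right hk (by norm_num)⟩
  obtain ⟨M, hM, hmin⟩ : ∃ M : ℕ, k ^ 2 ≤ M ^ 3 ∧ ∀ j < M, ¬ k ^ 2 ≤ j ^ 3 :=
    ⟨Nat.find hex, Nat.find_spec hex, fun j hj => Nat.find_min hex hj⟩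
  have hk2 : 1 ≤ k ^ 2 := Nat.one_le_pow _ _ hk
  have hM0 : 0 < M := by
    rcases Nat.eq_zero_or_pos M with rfl | h
    · simp at hM; omega
    · exact h
  refine ⟨M, hM0, hM, ?_⟩
  obtain ⟨j, rfl⟩ : ∃ j, M = j + 1 := ⟨M - 1, by omega⟩
  have h1 := not_le.1 (hmin j (by omega))
  rcases Nat.eq_zero_or_pos j with rfl | hj
  · simpa using by omega
  · calc (j + 1) ^ 3 ≤ (2 * j) ^ 3 := Nat.pow_le_pow_left (by omega) 3
      _ = 8 * j ^ 3 := by ring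
      _ ≤ 8 * k ^ 2 := by omega

theorem hv_inj {h κ b x x' y y' : ℝ} (hh : h ≠ 0) (hκ : 0 < κ)
    (hx : h ^ 2 + x' ^ 2 = κ ^ 2 * (h ^ 2 + x ^ 2)) (hb : b = x' - κ * x)
    (hy : h ^ 2 + y' ^ 2 = κ ^ 2 * (h ^ 2 + y ^ 2)) (hb' : b = y' - κ * y)
    (h1 : x' ≠ x) : x = y ∧ x' = y' := by
  have e1 : x' = κ * x + b := by linarith
  have e2 : y' = κ * y + b := by linarith
  have hb0 : b ≠ 0 := by
    intro hb0
    rw [e1, hb0] at hx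
    have : h ^ 2 * (1 - κ ^ 2) = 0 := by linarith [hx, (by ring : (κ * x + 0) ^ 2 = κ ^ 2 * x ^ 2)]
    rcases mul_eq_zero.1 this with h | h
    · exact hh (pow_eq_zero_iff (by norm_num) |>.1 h)
    · have : κ = 1 := by nlinarith
      apply h1; rw [e1, hb0, this]; ring
  have e3 : (2 * κ * b) * x = (2 * κ * b) * y := by
    rw [e1] at hx; rw [e2] at hy; linarith
  have e4 : x = y := mul_left_cancel₀ (by positivity) e3
  exact ⟨e4, by rw [e1, e2, e4]⟩

theorem heavy (T S : Finset ℝ) (h : ℝ) (hh : h ≠ 0)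
    (hS : ∀ x ∈ T, ∀ y ∈ T, (y - x) / √(h ^ 2 + x ^ 2) ∈ S) :
    T.card ^ 4 ≤ 4096 * S.card ^ 3 := by
  classical
  set k := T.card with hk
  rcases Nat.eq_zero_or_pos k with h0 | hkpos
  · rw [h0]; positivity
  have hspos : ∀ x : ℝ, 0 < √(h ^ 2 + x ^ 2) := fun x => by positivity
  have hssq : ∀ x : ℝ, √(h ^ 2 + x ^ 2) ^ 2 = h ^ 2 + x ^ 2 := fun x => Real.sq_sqrt (by positivity)
  set f : ℝ × ℝ → ℝ := fun p => (p.2 - p.1) / √(h ^ 2 + p.1 ^ 2) with hf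
  set Q := ((T ×ˢ T) ×ˢ (T ×ˢ T)).filter (fun q => f q.1 = f q.2) with hQ
  have hTT : (T ×ˢ T).card = k * k := by rw [Finset.card_product]
  have hE : (k * k) ^ 2 ≤ S.card * Q.card := by
    have hmap : ∀ p ∈ T ×ˢ T, f p ∈ S := by
      intro p hp
      exact hS _ (Finset.mem_product.1 hp).1 _ (Finset.mem_product.1 hp).2
    have e1 := Finset.card_eq_sum_card_fiberwise (f := f) (s := T ×ˢ T) (t := S) hmap
    rw [← hTT, e1]
    refine (sq_sum_le_card_mul_sum_sq).trans (Nat.mul_le_mul_left _ ?_)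
    rw [Finset.card_eq_sum_card_fiberwise (f := fun q : (ℝ × ℝ) × (ℝ × ℝ) => f q.1) (s := Q) (t := S)
      (fun q hq => hmap _ (Finset.mem_product.1 (Finset.mem_filter.1 hq).1).1)]
    apply Finset.sum_le_sum
    intro s _
    rw [pow_two, ← Finset.card_product]
    apply Finset.card_le_card
    intro q hq
    obtain ⟨q1, q2⟩ := Finset.mem_product.1 hq
    obtain ⟨q3, q4⟩ := Finset.mem_filter.1 q1
    obtain ⟨q5, q6⟩ := Finset.mem_filter.1 q2
    exact Finset.mem_filter.2 ⟨Finset.mem_filter.2 ⟨Finset.mem_product.2 ⟨q3, q5⟩,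
      q4.trans q6.symm⟩, q4⟩
  obtain ⟨M, hM0, hM1, hM2⟩ := hv_M k hkpos
  set Qa := Q.filter (fun q => q.2.1 = q.1.1) with hQa
  set Qb := Q.filter (fun q => q.2.1 = -q.1.1) with hQb
  set Qc := Q.filter (fun q => q.2.1 ≠ q.1.1 ∧ q.2.1 ≠ -q.1.1) with hQc
  have hsub : Q ⊆ (Qa ∪ Qb) ∪ Qc := by
    intro q hq
    by_cases h1 : q.2.1 = q.1.1
    · exact Finset.mem_union_left _ (Finset.mem_union_left _ (Finset.mem_filter.2 ⟨hq, h1⟩))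
    by_cases h2 : q.2.1 = -q.1.1
    · exact Finset.mem_union_left _ (Finset.mem_union_right _ (Finset.mem_filter.2 ⟨hq, h2⟩))
    · exact Finset.mem_union_right _ (Finset.mem_filter.2 ⟨hq, h1, h2⟩)
  have hQf : ∀ q ∈ Q, q.1 ∈ T ×ˢ T ∧ q.2 ∈ T ×ˢ T ∧ f q.1 = f q.2 := by
    intro q hq
    obtain ⟨q1, q2⟩ := Finset.mem_filter.1 hq
    exact ⟨(Finset.mem_product.1 q1).1, (Finset.mem_product.1 q1).2, q2⟩
  have finj : ∀ x y y' : ℝ, f (x, y) = f (x, y') → y = y' := by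
    intro x y y' hxy
    simp only [hf] at hxy
    rw [div_left_inj' (hspos x).ne'] at hxy
    linarith
  have ca : Qa.card ≤ k * k := by
    rw [← hTT]
    apply Finset.card_le_card_of_injOn Prod.fst
    · intro q hq; exact (hQf q (Finset.mem_filter.1 hq).1).1
    · rintro ⟨p, x, y⟩ hq ⟨p', x', y'⟩ hq' heq
      obtain ⟨a1, a2⟩ := Finset.mem_filter.1 hq
      obtain ⟨b1, b2⟩ := Finset.mem_filter.1 hq'
      dsimp only at heq a2 b2
      subst heq; subst a2; subst b2
      rw [finj _ _ _ ((hQf _ a1).2.2.symm.trans (hQf _ b1).2.2)]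
  have cb : Qb.card ≤ k * k := by
    rw [← hTT]
    apply Finset.card_le_card_of_injOn Prod.fst
    · intro q hq; exact (hQf q (Finset.mem_filter.1 hq).1).1
    · rintro ⟨p, x, y⟩ hq ⟨p', x', y'⟩ hq' heq
      obtain ⟨a1, a2⟩ := Finset.mem_filter.1 hq
      obtain ⟨b1, b2⟩ := Finset.mem_filter.1 hq'
      dsimp only at heq a2 b2
      subst heq; subst a2; subst b2
      rw [finj _ _ _ ((hQf _ a1).2.2.symm.trans (hQf _ b1).2.2)]
  set L : ℝ × ℝ → ℝ × ℝ := fun p => (√(h ^ 2 + p.2 ^ 2) / √(h ^ 2 + p.1 ^ 2),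
    p.2 - √(h ^ 2 + p.2 ^ 2) / √(h ^ 2 + p.1 ^ 2) * p.1) with hL
  have hLsq : ∀ x x' : ℝ, h ^ 2 + x' ^ 2 = (L (x, x')).1 ^ 2 * (h ^ 2 + x ^ 2) := by
    intro x x'
    simp only [hL]
    rw [div_pow, hssq, hssq]
    have : h ^ 2 + x ^ 2 ≠ 0 := by positivity
    field_simp
  have Linj : ∀ x x' y y' : ℝ, x' ≠ x → L (x, x') = L (y, y') → x = y ∧ x' = y' := by
    intro x x' y y' hne heq
    have g1 := hLsq x x'
    have g2 := hLsq y y'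
    rw [← heq] at g2
    have g3 : (L (x, x')).2 = x' - (L (x, x')).1 * x := rfl
    have g4 : (L (x, x')).2 = y' - (L (x, x')).1 * y := by rw [heq]
    exact hv_inj hh (div_pos (hspos _) (hspos _)) g1 g3 g2 g4 hne
  set S0 := (T ×ˢ T).image L with hS0
  have cc : Qc.card ≤ (incs (T ×ˢ T) S0 (fun l x => l.1 * x + l.2)).card := by
    apply Finset.card_le_card_of_injOn (fun q => (L (q.1.1, q.2.1), (q.1.2, q.2.2)))
    · rintro ⟨⟨x, y⟩, ⟨x', y'⟩⟩ hq
      obtain ⟨a1, a2⟩ := Finset.mem_filter.1 hq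
      obtain ⟨b1, b2, b3⟩ := hQf _ a1
      obtain ⟨c1, c2⟩ := Finset.mem_product.1 b1
      obtain ⟨d1, d2⟩ := Finset.mem_product.1 b2
      dsimp only at *
      refine mem_incs.2 ⟨Finset.mem_image_of_mem _ (Finset.mem_product.2 ⟨c1, d1⟩),
        Finset.mem_product.2 ⟨c2, d2⟩, ?_⟩
      simp only [hL, hf] at b3 ⊢
      have p1 := (hspos x).ne'
      have p2 := (hspos x').ne'
      rw [div_eq_div_iff p1 p2] at b3
      have : √(h ^ 2 + x' ^ 2) / √(h ^ 2 + x ^ 2) * (y - x) = y' - x' := by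
        rw [div_mul_eq_mul_div, div_eq_iff p1]; linarith
      linarith
    · rintro ⟨⟨x, y⟩, ⟨x', y'⟩⟩ hq ⟨⟨u, v⟩, ⟨u', v'⟩⟩ hq' heq
      obtain ⟨a1, a2⟩ := Finset.mem_filter.1 hq
      simp only [Prod.mk.injEq] at heq
      obtain ⟨heq, rfl, rfl⟩ := heq
      obtain ⟨rfl, rfl⟩ := Linj _ _ _ _ a2.1 heq
      rfl
  have hst := st_lines (T ×ˢ T) S0 M hM0
  have cS : S0.card ≤ k * k := by rw [← hTT]; exact Finset.card_image_le
  rw [hTT] at hst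
  have hc1 := Finset.card_le_card hsub
  have hc2 := Finset.card_union_le (Qa ∪ Qb) Qc
  have hc3 := Finset.card_union_le Qa Qb
  set I := (incs (T ×ˢ T) S0 (fun l x => l.1 * x + l.2)).card
  have hI : I ≤ 6 * (k * k) * M := by
    have e1 : S0.card * M ^ 2 ≤ (k * k) * M ^ 3 := by
      apply Nat.mul_le_mul cS
      exact Nat.pow_le_pow_right hM0 (by norm_num)
    have e2 : S0.card ^ 2 ≤ (k * k) * M ^ 3 := by
      rw [pow_two]
      apply Nat.mul_le_mul cS
      nlinarith
    have e3 : I * M ^ 2 ≤ (6 * (k * k) * M) * M ^ 2 := by nlinarith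
    exact Nat.le_of_mul_le_mul_right e3 (Nat.pow_pos hM0)
  have hQ8 : Q.card ≤ 8 * (k * k) * M := by nlinarith
  have h2 : (k * k) * (k * k) ≤ (k * k) * (8 * S.card * M) := by
    calc (k * k) * (k * k) = (k * k) ^ 2 := by ring
      _ ≤ S.card * Q.card := hE
      _ ≤ S.card * (8 * (k * k) * M) := Nat.mul_le_mul_left _ hQ8
      _ = _ := by ring
  have h3 : k * k ≤ 8 * S.card * M := Nat.le_of_mul_le_mul_left h2 (Nat.mul_pos hkpos hkpos)
  have h4 : k ^ 2 * k ^ 4 ≤ k ^ 2 * (4096 * S.card ^ 3) := by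
    calc k ^ 2 * k ^ 4 = (k * k) ^ 3 := by ring
      _ ≤ (8 * S.card * M) ^ 3 := Nat.pow_le_pow_left h3 3
      _ = 512 * S.card ^ 3 * M ^ 3 := by ring
      _ ≤ 512 * S.card ^ 3 * (8 * k ^ 2) := Nat.mul_le_mul_left _ hM2
      _ = _ := by ring
  exact Nat.le_of_mul_le_mul_left h4 (Nat.pow_pos hkpos)


noncomputable def dst (a b e : ℝ × ℝ) : ℝ :=
  |(a.1 - b.1) * (e.2 - b.2) - (a.2 - b.2) * (e.1 - b.1)| /
    √((e.1 - b.1) ^ 2 + (e.2 - b.2) ^ 2)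


theorem heavy_line1 (P : Finset (ℝ × ℝ)) (Δ : Finset ℝ)
    (hΔ : ∀ a ∈ P, ∀ b ∈ P, ∀ e ∈ P, b ≠ e → dst a b e ∈ Δ) (a b c : ℝ)
    (hab : a ^ 2 + b ^ 2 = 1) (H : Finset (ℝ × ℝ)) (hH : H ⊆ P)
    (hl : ∀ x ∈ H, a * x.1 + b * x.2 = c) (p : ℝ × ℝ) (hp : p ∈ P)
    (hpc : a * p.1 + b * p.2 ≠ c) : H.card ^ 4 ≤ 4096 * (2 * Δ.card) ^ 3 := by
  classical
  set h := a * p.1 + b * p.2 - c with hh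
  have hh0 : h ≠ 0 := sub_ne_zero.2 hpc
  set t : ℝ × ℝ → ℝ := fun x => -b * (x.1 - p.1) + a * (x.2 - p.2) with ht
  have c1 : ∀ x ∈ H, x.1 - p.1 = -a * h - b * t x := by
    intro x hx
    have := hl x hx
    have h2 : -h = a * (x.1 - p.1) + b * (x.2 - p.2) := by rw [hh]; linarith
    simp only [ht]
    linear_combination (-(x.1 - p.1)) * hab - a * h2
  have c2 : ∀ x ∈ H, x.2 - p.2 = -b * h + a * t x := by
    intro x hx
    have := hl x hx
    have h2 : -h = a * (x.1 - p.1) + b * (x.2 - p.2) := by rw [hh]; linarith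
    simp only [ht]
    linear_combination (-(x.2 - p.2)) * hab - b * h2
  have hcard : (H.image t).card = H.card := by
    apply Finset.card_image_of_injOn
    intro x hx y hy hxy
    have e1 := c1 x hx
    have e2 := c2 x hx
    have e3 := c1 y hy
    have e4 := c2 y hy
    rw [hxy] at e1 e2
    ext <;> linarith
  set S := Δ.image (fun d => d / h) ∪ Δ.image (fun d => -d / h) with hS
  have hSc : S.card ≤ 2 * Δ.card := by
    have h0 : S.card ≤ (Δ.image (fun d => d / h)).card + (Δ.image (fun d => -d / h)).card :=
      Finset.card_union_le _ _
    have h1 : (Δ.image (fun d => d / h)).card ≤ Δ.card := Finset.card_image_le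
    have h2 : (Δ.image (fun d => -d / h)).card ≤ Δ.card := Finset.card_image_le
    omega
  have hmain := heavy (H.image t) S h hh0 (by
    intro u hu v hv
    obtain ⟨x, hx, rfl⟩ := Finset.mem_image.1 hu
    obtain ⟨y, hy, rfl⟩ := Finset.mem_image.1 hv
    have hpx : p ≠ x := by
      rintro rfl
      exact hpc (hl _ hx)
    have hd := hΔ y (hH hy) p hp x (hH hx) hpx
    have hs : 0 < √(h ^ 2 + t x ^ 2) := by positivity
    have hv : dst y p x = |h * (t y - t x)| / √(h ^ 2 + t x ^ 2) := by
      unfold dst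
      rw [c1 x hx, c2 x hx, c1 y hy, c2 y hy]
      congr 2
      · linear_combination (h * (t y - t x)) * hab
      · linear_combination (h ^ 2 + t x ^ 2) * hab
    rw [hv] at hd
    rcases abs_choice (h * (t y - t x)) with hc | hc <;> rw [hc] at hd
    · refine Finset.mem_union_left _ (Finset.mem_image.2 ⟨_, hd, ?_⟩)
      field_simp
    · refine Finset.mem_union_right _ (Finset.mem_image.2 ⟨_, hd, ?_⟩)
      field_simp)
  rw [hcard] at hmain
  exact hmain.trans (Nat.mul_le_mul_left _ (Nat.pow_le_pow_left hSc 3))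

theorem heavy_line2 (P : Finset (ℝ × ℝ)) (Δ : Finset ℝ)
    (hΔ : ∀ a ∈ P, ∀ b ∈ P, ∀ e ∈ P, b ≠ e → dst a b e ∈ Δ)
    (hnc : ∀ a b c : ℝ, a ^ 2 + b ^ 2 ≠ 0 → ∃ p ∈ P, a * p.1 + b * p.2 ≠ c) (a b c : ℝ)
    (hab : a ^ 2 + b ^ 2 ≠ 0) (H : Finset (ℝ × ℝ)) (hH : H ⊆ P)
    (hl : ∀ x ∈ H, a * x.1 + b * x.2 = c) : H.card ^ 4 ≤ 4096 * (2 * Δ.card) ^ 3 := by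
  obtain ⟨p, hp, hpc⟩ := hnc a b c hab
  have hpos : 0 < a ^ 2 + b ^ 2 := lt_of_le_of_ne (by positivity) (Ne.symm hab)
  set N := √(a ^ 2 + b ^ 2) with hN
  have hN0 : 0 < N := Real.sqrt_pos.2 hpos
  have hN2 : N ^ 2 = a ^ 2 + b ^ 2 := Real.sq_sqrt hpos.le
  refine heavy_line1 P Δ hΔ (a / N) (b / N) (c / N) ?_ H hH ?_ p hp ?_
  · rw [div_pow, div_pow, hN2]; field_simp
  · intro x hx
    rw [← hl x hx]; ring
  · intro h
    apply hpc
    have : (a * p.1 + b * p.2) / N = c / N := by rw [← h]; ring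
    exact (div_left_inj' hN0.ne').1 this

theorem crv_exists (P : Finset (ℝ × ℝ)) (Δ Δ' : Finset ℝ) (hp : ∀ d ∈ Δ, d ∈ Δ' ∧ -d ∈ Δ')
    (hΔ : ∀ a ∈ P, ∀ b ∈ P, ∀ e ∈ P, b ≠ e → dst a b e ∈ Δ) :
    ∀ a ∈ P, ∀ v ∈ lns P, ∃ d ∈ Δ', crv (a, d) v.1 = v.2 := by
  classical
  intro a ha v hv
  obtain ⟨⟨p, q⟩, hpq, rfl⟩ := Finset.mem_image.1 hv
  obtain ⟨h1, h2⟩ := Finset.mem_filter.1 hpq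
  obtain ⟨h3, h4⟩ := Finset.mem_product.1 h1
  dsimp only at h2 h3 h4
  have hd := hΔ a ha p h3 q h4 (fun h => h2 (by rw [h]))
  have el := ln_left (p, q)
  have er := ln_right (p, q) h2
  dsimp only at el er
  set s := (ln (p, q)).1
  set w := (ln (p, q)).2
  have hR := crv_sqrt_pos s
  have hx : q.1 - p.1 ≠ 0 := fun h => h2 (by linarith)
  have hv : dst a p q = |(a.2 - s * a.1 - w) / √(1 + s ^ 2)| := by
    unfold dst
    have e1 : (q.1 - p.1) ^ 2 + (q.2 - p.2) ^ 2 = (q.1 - p.1) ^ 2 * (1 + s ^ 2) := by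
      rw [← el, ← er]; ring
    have e2 : (a.1 - p.1) * (q.2 - p.2) - (a.2 - p.2) * (q.1 - p.1) =
        -((q.1 - p.1) * (a.2 - s * a.1 - w)) := by
      rw [← el, ← er]; ring
    rw [e1, e2, abs_neg, abs_mul, Real.sqrt_mul (sq_nonneg _), Real.sqrt_sq_eq_abs, abs_div,
      abs_of_pos hR]
    have : |q.1 - p.1| ≠ 0 := abs_ne_zero.2 hx
    field_simp
  have hcr : crv (a, (a.2 - s * a.1 - w) / √(1 + s ^ 2)) s = w := by
    unfold crv; dsimp only
    rw [div_mul_cancel₀ _ hR.ne']; ring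
  refine ⟨_, ?_, hcr⟩
  rw [hv] at hd
  rcases abs_choice ((a.2 - s * a.1 - w) / √(1 + s ^ 2)) with hc | hc <;> rw [hc] at hd
  · exact (hp _ hd).1
  · simpa using (hp _ hd).2

theorem main_coord (P : Finset (ℝ × ℝ)) (Δ : Finset ℝ)
    (hΔ : ∀ a ∈ P, ∀ b ∈ P, ∀ e ∈ P, b ≠ e → dst a b e ∈ Δ)
    (hnc : ∀ a b c : ℝ, a ^ 2 + b ^ 2 ≠ 0 → ∃ p ∈ P, a * p.1 + b * p.2 ≠ c) :
    P.card ^ 4 ≤ 2 ^ 114 * Δ.card ^ 3 := by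
  classical
  have hD1 : 1 ≤ Δ.card := by
    obtain ⟨p, hp, _⟩ := hnc 1 0 0 (by norm_num)
    have : ∃ q ∈ P, p ≠ q := by
      obtain ⟨q, hq, hq1⟩ := hnc 1 0 p.1 (by norm_num)
      exact ⟨q, hq, by rintro rfl; simp at hq1⟩
    obtain ⟨q, hq, hpq⟩ := this
    exact Finset.card_pos.2 ⟨_, hΔ p hp p hp q hq hpq⟩
  set D := Δ.card with hD
  have hD3 : 1 ≤ D ^ 3 := Nat.one_le_pow _ _ hD1
  by_cases hm : 2 ^ 27 ≤ P.card
  swap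
  · have : P.card ^ 4 ≤ (2 ^ 27) ^ 4 := Nat.pow_le_pow_left (not_le.1 hm).le 4
    calc P.card ^ 4 ≤ (2 ^ 27) ^ 4 := this
      _ ≤ 2 ^ 114 * 1 := by norm_num
      _ ≤ _ := Nat.mul_le_mul_left _ hD3
  have hvy : ∀ (H : Finset (ℝ × ℝ)) (a b c : ℝ), a ^ 2 + b ^ 2 ≠ 0 → H ⊆ P →
      (∀ x ∈ H, a * x.1 + b * x.2 = c) → P.card < H.card * 1024 →
      P.card ^ 4 ≤ 2 ^ 114 * D ^ 3 := by
    intro H a b c hab hH hl hlt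
    have h1 := heavy_line2 P Δ hΔ hnc a b c hab H hH hl
    calc P.card ^ 4 ≤ (H.card * 1024) ^ 4 := Nat.pow_le_pow_left hlt.le 4
      _ = H.card ^ 4 * 1024 ^ 4 := by ring
      _ ≤ 4096 * (2 * D) ^ 3 * 1024 ^ 4 := Nat.mul_le_mul_right _ h1
      _ = 2 ^ 55 * D ^ 3 := by ring
      _ ≤ _ := Nat.mul_le_mul_right _ (by norm_num)
  by_cases hl : ∀ l, (onl P l).card * 1024 ≤ P.card
  swap
  · push Not at hl
    obtain ⟨l, hl⟩ := hl
    refine hvy (onl P l) (-l.1) 1 l.2 (by positivity) (Finset.filter_subset _ _) ?_ hl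
    intro x hx
    have := (Finset.mem_filter.1 hx).2
    linarith
  by_cases hv : ∀ x, 2 * (P.filter (fun p => p.1 = x)).card ≤ P.card
  swap
  · push Not at hv
    obtain ⟨x, hx⟩ := hv
    refine hvy (P.filter (fun p => p.1 = x)) 1 0 x (by norm_num) (Finset.filter_subset _ _) ?_
      (by omega)
    intro y hy
    have := (Finset.mem_filter.1 hy).2
    linarith
  have hb := beck P hm hl hv
  set Δ' := Δ ∪ Δ.image (fun d => -d) with hΔ'
  have hcr := crv_exists P Δ Δ' (fun d hd => ⟨Finset.mem_union_left _ hd,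
    Finset.mem_union_right _ (Finset.mem_image_of_mem _ hd)⟩) hΔ
  have hDc : Δ'.card ≤ 2 * D := by
    have h0 : Δ'.card ≤ Δ.card + (Δ.image (fun d => -d)).card := Finset.card_union_le _ _
    have h1 : (Δ.image (fun d => -d)).card ≤ Δ.card := Finset.card_image_le
    omega
  have hD'1 : 1 ≤ Δ'.card := hD1.trans (Finset.card_le_card Finset.subset_union_left)
  have hml : ∀ M r : ℕ, 0 < M → 24 * M ≤ P.card → 400 * r ≤ (lns P).card →
      50 * M * Δ'.card ≤ r → r * M ≤ 200 * Δ'.card ^ 2 := by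
    intro M r hM h1 h2 h3
    obtain ⟨A, hA, hAc⟩ := Finset.exists_subset_card_eq h1
    refine many_lines A Δ' (lns P) (fun a ha => hcr a (hA ha)) M r hM hAc h2 (le_trans ?_ h3)
    apply Nat.mul_le_mul_right
    omega
  suffices hfin : P.card ^ 4 ≤ 2 ^ 111 * Δ'.card ^ 3 by
    calc P.card ^ 4 ≤ 2 ^ 111 * Δ'.card ^ 3 := hfin
      _ ≤ 2 ^ 111 * (2 * D) ^ 3 := Nat.mul_le_mul_left _ (Nat.pow_le_pow_left hDc 3)
      _ = _ := by ring
  generalize Δ'.card = E at *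
  generalize (lns P).card = n at *
  generalize P.card = m at *
  clear hvy hl hv hcr hDc
  have hn : 2 ^ 16 ≤ n := by
    by_contra hc
    have h1 : (2 ^ 27) ^ 2 ≤ m ^ 2 := Nat.pow_le_pow_left hm 2
    norm_num at *
    omega
  obtain ⟨r, hr⟩ : ∃ r, r = n / 400 := ⟨_, rfl⟩
  have hr1 : 400 * r ≤ n := by omega
  have hr2 : n ≤ 800 * r := by norm_num at hn; omega
  have hmr : m ^ 2 ≤ 2 ^ 48 * r := by norm_num at *; omega
  obtain ⟨M0, hM0⟩ : ∃ M0, M0 = r / (50 * E) := ⟨_, rfl⟩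
  have hEp : 0 < 50 * E := by omega
  have hM1 : M0 * (50 * E) ≤ r := hM0 ▸ Nat.div_mul_le_self _ _
  have hM2 : r < (M0 + 1) * (50 * E) := by
    rw [hM0, ← Nat.div_lt_iff_lt_mul hEp]; omega
  rcases Nat.eq_zero_or_pos M0 with h0 | hpos
  · rw [h0] at hM2
    have h1 : m ^ 2 ≤ 2 ^ 54 * E := by norm_num at *; omega
    have h2 : E ^ 2 ≤ E ^ 3 := Nat.pow_le_pow_right hD'1 (by norm_num)
    calc m ^ 4 = (m ^ 2) ^ 2 := by ring
      _ ≤ (2 ^ 54 * E) ^ 2 := Nat.pow_le_pow_left h1 2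
      _ = 2 ^ 108 * E ^ 2 := by ring
      _ ≤ 2 ^ 111 * E ^ 3 := Nat.mul_le_mul (by norm_num) h2
  by_cases hle : 24 * M0 ≤ m
  · have h1 := hml M0 r hpos hle hr1 (by nlinarith)
    have h2 : r ≤ 100 * E * M0 := by nlinarith
    have h3 : r ^ 2 ≤ 20000 * E ^ 3 := by
      calc r ^ 2 = r * r := by ring
        _ ≤ r * (100 * E * M0) := Nat.mul_le_mul_left _ h2
        _ = (r * M0) * (100 * E) := by ring
        _ ≤ (200 * E ^ 2) * (100 * E) := Nat.mul_le_mul_right _ h1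
        _ = _ := by ring
    calc m ^ 4 = (m ^ 2) ^ 2 := by ring
      _ ≤ (2 ^ 48 * r) ^ 2 := Nat.pow_le_pow_left hmr 2
      _ = 2 ^ 96 * r ^ 2 := by ring
      _ ≤ 2 ^ 96 * (20000 * E ^ 3) := Nat.mul_le_mul_left _ h3
      _ = (2 ^ 96 * 20000) * E ^ 3 := by ring
      _ ≤ 2 ^ 111 * E ^ 3 := Nat.mul_le_mul_right _ (by norm_num)
  · obtain ⟨M, hM⟩ : ∃ M, M = m / 24 := ⟨_, rfl⟩
    have hmm : 48 ≤ m := le_trans (by norm_num) hm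
    have hMM : M ≤ M0 := by omega
    have h1 := hml M r (by omega) (by omega) hr1 (by
      refine le_trans ?_ hM1
      calc 50 * M * E = M * (50 * E) := by ring
        _ ≤ _ := Nat.mul_le_mul_right _ hMM)
    have h2 : m ≤ 48 * M := by omega
    have h3 : m ^ 3 ≤ 2 ^ 62 * E ^ 2 := by
      calc m ^ 3 = m ^ 2 * m := by ring
        _ ≤ (2 ^ 48 * r) * (48 * M) := Nat.mul_le_mul hmr h2
        _ = 2 ^ 48 * 48 * (r * M) := by ring
        _ ≤ 2 ^ 48 * 48 * (200 * E ^ 2) := Nat.mul_le_mul_left _ h1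
        _ = (2 ^ 48 * 48 * 200) * E ^ 2 := by ring
        _ ≤ _ := Nat.mul_le_mul_right _ (by norm_num)
    have h4 : (m ^ 4) ^ 2 ≤ (2 ^ 93 * E ^ 3) ^ 2 := by
      calc (m ^ 4) ^ 2 = m ^ 8 := by ring
        _ ≤ m ^ 9 := Nat.pow_le_pow_right (by omega) (by norm_num)
        _ = (m ^ 3) ^ 3 := by ring
        _ ≤ (2 ^ 62 * E ^ 2) ^ 3 := Nat.pow_le_pow_left h3 3
        _ = _ := by ring
    have h5 := (Nat.pow_le_pow_iff_left (by norm_num)).1 h4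
    exact h5.trans (Nat.mul_le_mul_right _ (by norm_num))

def cd2 (p : Pt2) : ℝ × ℝ := (p 0, p 1)

theorem cd2_inj : Function.Injective cd2 := by
  intro p q h
  have h1 := (Prod.mk.inj h).1
  have h2 := (Prod.mk.inj h).2
  ext i
  fin_cases i
  · exact h1
  · exact h2

theorem infDist_line (a b e : Pt2) (hbe : b ≠ e) :
    Metric.infDist a (lineThrough2 b e) = dst (cd2 a) (cd2 b) (cd2 e) := by
  have hne : (e 0 - b 0) ^ 2 + (e 1 - b 1) ^ 2 ≠ 0 := by
    intro h
    apply hbe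
    have h1 : e 0 - b 0 = 0 := by nlinarith [sq_nonneg (e 0 - b 0), sq_nonneg (e 1 - b 1)]
    have h2 : e 1 - b 1 = 0 := by nlinarith [sq_nonneg (e 0 - b 0), sq_nonneg (e 1 - b 1)]
    apply cd2_inj
    exact Prod.ext (by simp only [cd2]; linarith) (by simp only [cd2]; linarith)
  have hdist : ∀ t : ℝ, dist a (b + t • (e - b)) =
      √((a 0 - (b 0 + t * (e 0 - b 0))) ^ 2 + (a 1 - (b 1 + t * (e 1 - b 1))) ^ 2) := by
    intro t
    rw [EuclideanSpace.dist_eq, Fin.sum_univ_two, Real.dist_eq, Real.dist_eq, sq_abs, sq_abs]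
    simp
  simp only [dst, cd2]
  set u := e 0 - b 0
  set v := e 1 - b 1
  set x := a 0
  set y := a 1
  have hpos : 0 < u ^ 2 + v ^ 2 := lt_of_le_of_ne (by positivity) (Ne.symm hne)
  have hN : 0 < √(u ^ 2 + v ^ 2) := Real.sqrt_pos.2 hpos
  apply le_antisymm
  · set t := ((x - b 0) * u + (y - b 1) * v) / (u ^ 2 + v ^ 2) with ht
    have h1 : Metric.infDist a (lineThrough2 b e) ≤ dist a (b + t • (e - b)) :=
      Metric.infDist_le_dist_of_mem ⟨t, rfl⟩
    refine h1.trans (le_of_eq ?_)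
    rw [hdist t]
    have h2 : (x - (b 0 + t * u)) ^ 2 + (y - (b 1 + t * v)) ^ 2 =
        (((x - b 0) * v - (y - b 1) * u) / √(u ^ 2 + v ^ 2)) ^ 2 := by
      rw [div_pow, Real.sq_sqrt hpos.le, ht]
      field_simp
      ring
    rw [h2, Real.sqrt_sq_eq_abs, abs_div, abs_of_pos hN]
  · rw [Metric.le_infDist (show (lineThrough2 b e).Nonempty from ⟨b, 0, by simp⟩)]
    rintro z ⟨t, rfl⟩
    rw [hdist t, div_le_iff₀ hN, ← Real.sqrt_mul (by positivity)]
    apply Real.abs_le_sqrt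
    nlinarith [sq_nonneg ((x - (b 0 + t * u)) * u + (y - (b 1 + t * v)) * v)]

theorem distances_points_spanned_lines :
    ∃ c : ℝ, 0 < c ∧
      ∀ (m : ℕ) (P : Finset Pt2), P.card = m →
        (¬ ∃ l : Set Pt2, IsLine2 l ∧ (P : Set Pt2) ⊆ l) →
        c * (m : ℝ) ^ ((4 : ℝ) / 3) ≤
          (({d : ℝ | ∃ a ∈ P, ∃ b ∈ P, ∃ e ∈ P, b ≠ e ∧
              d = Metric.infDist a (lineThrough2 b e)}).ncard : ℝ) := by
  classical
  refine ⟨1 / 2 ^ 38, by positivity, ?_⟩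
  intro m P hPm hnl
  set Dset : Set ℝ := {d : ℝ | ∃ a ∈ P, ∃ b ∈ P, ∃ e ∈ P, b ≠ e ∧
              d = Metric.infDist a (lineThrough2 b e)} with hDset
  set Δ : Finset ℝ := ((P ×ˢ (P ×ˢ P)).filter (fun p => p.2.1 ≠ p.2.2)).image
    (fun p => Metric.infDist p.1 (lineThrough2 p.2.1 p.2.2)) with hΔ
  have hD : Dset = (Δ : Set ℝ) := by
    ext d
    simp only [hDset, hΔ, Set.mem_ofPred_eq, Finset.coe_image, Set.mem_image, Finset.mem_coe,
      Finset.mem_filter, Finset.mem_product]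
    constructor
    · rintro ⟨a, ha, b, hb, e, he, hbe, rfl⟩
      exact ⟨(a, b, e), ⟨⟨ha, hb, he⟩, hbe⟩, rfl⟩
    · rintro ⟨⟨a, b, e⟩, ⟨⟨ha, hb, he⟩, hbe⟩, rfl⟩
      exact ⟨a, ha, b, hb, e, he, hbe, rfl⟩
  rw [hD, Set.ncard_coe_finset]
  have hmain := main_coord (P.image cd2) Δ (by
    intro a ha b hb e he hbe
    obtain ⟨a, ha1, rfl⟩ := Finset.mem_image.1 ha
    obtain ⟨b, hb1, rfl⟩ := Finset.mem_image.1 hb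
    obtain ⟨e, he1, rfl⟩ := Finset.mem_image.1 he
    have hbe' : b ≠ e := fun h => hbe (by rw [h])
    rw [← infDist_line a b e hbe']
    exact Finset.mem_image.2 ⟨(a, b, e), Finset.mem_filter.2 ⟨Finset.mem_product.2
      ⟨ha1, Finset.mem_product.2 ⟨hb1, he1⟩⟩, hbe'⟩, rfl⟩) (by
    intro a b c hab
    by_contra hcon
    push Not at hcon
    apply hnl
    have hz : ∀ p q : ℝ, cd2 !₂[p, q] = (p, q) := by
      intro p q; simp [cd2]
    refine ⟨_, ⟨!₂[a * c / (a ^ 2 + b ^ 2), b * c / (a ^ 2 + b ^ 2)], !₂[-b, a], ?_, rfl⟩, ?_⟩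
    · intro h0
      have h1 := congrArg (fun z : Pt2 => z 0) h0
      have h2 := congrArg (fun z : Pt2 => z 1) h0
      simp at h1 h2
      exact hab (by rw [h1, h2]; norm_num)
    · intro p hp
      have h1 := hcon (cd2 p) (Finset.mem_image_of_mem _ hp)
      simp only [cd2] at h1
      refine ⟨(-b * p 0 + a * p 1) / (a ^ 2 + b ^ 2), ?_⟩
      ext i
      fin_cases i
      · simp
        rw [← h1]; field_simp; ring
      · simp
        rw [← h1]; field_simp; ring)
  rw [Finset.card_image_of_injective _ cd2_inj, hPm] at hmain
  generalize Δ.card = D at *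
  have h1 : (m : ℝ) ^ 4 ≤ (2 ^ 38 * D) ^ 3 := by
    have : m ^ 4 ≤ (2 ^ 38 * D) ^ 3 := hmain.trans (le_of_eq (by ring))
    exact_mod_cast this
  have h2 : (m : ℝ) ^ ((4 : ℝ) / 3) ≤ 2 ^ 38 * D := by
    have e1 : (m : ℝ) ^ ((4 : ℝ) / 3) = ((m : ℝ) ^ 4) ^ ((1 : ℝ) / 3) := by
      rw [← Real.rpow_natCast, ← Real.rpow_mul (Nat.cast_nonneg m)]; norm_num
    have e3 : ∀ z : ℝ, 0 ≤ z → z = (z ^ 3) ^ ((1 : ℝ) / 3) := by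
      intro z hz
      rw [← Real.rpow_natCast, ← Real.rpow_mul hz]; norm_num
    have e2 := e3 (2 ^ 38 * (D : ℝ)) (by positivity)
    rw [e1, e2]
    exact Real.rpow_le_rpow (by positivity) h1 (by norm_num)
  rw [one_div, inv_mul_le_iff₀ (by positivity)]
  exact h2
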